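/- Let z ∈ ℂ with z ≠ 0, set z' = conj(z), and let ξ ∈ (0, 1/2). Set α = √ξ/(ξ−1) and β = √ξ, and define K(i,j) = Σ_{m ∈ ℤ_{<0}+1/2} ⟨i|m⟩_{α,β,z,z'} · ⟨j|m⟩*_{α,β,z,z'} for i, j ∈ ℤ+1/2 (the series converges absolutely). Then for every finite set X = {x_1, …, x_s} of distinct points of ℤ+1/2, the correlation function ρ(X) = Σ_{λ : X ⊆ S(λ)} M(λ) satisfies ρ(X) = det[K(x_a, x_b)]_{1 ≤ a,b ≤ s}. -/

import Mathlib

open scoped Classical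

noncomputable section

/-- The content of a cell `c = (i, j)` (0-indexed row `i` and column `j`) of a Young diagram:
`c(□) = column(□) - row(□)`. -/
def cellContent (c : ℕ × ℕ) : ℤ := (c.2 : ℤ) - (c.1 : ℤ)

/-- The hook length of the cell `c = (i, j)` of the Young diagram `Y`:
`h(□) = λ_i - j + λ'_j - i - 1` in 0-indexed coordinates. -/
def hookLen (Y : YoungDiagram) (c : ℕ × ℕ) : ℕ :=
  (Y.rowLen c.1 - c.2) + (Y.colLen c.2 - c.1) - 1

/-- The product `Π_{□ ∈ λ} (z + c(□)) (z' + c(□)) / h(□)²`. -/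
def zWeight (z z' : ℂ) (Y : YoungDiagram) : ℂ :=
  ∏ c ∈ Y.cells, ((z + cellContent c) * (z' + cellContent c) / (hookLen Y c : ℂ) ^ 2)

/-- The finset of squares addable to the Young diagram `Y`: cells `c ∉ Y` such that
adding `c` to `Y` again yields a Young diagram, i.e. every strictly smaller cell
(in the product order) already belongs to `Y`.  Any such cell has the form
`(i, Y.rowLen i)` for some `i ≤ Y.colLen 0`. -/
def addables (Y : YoungDiagram) : Finset (ℕ × ℕ) :=
  ((Finset.range (Y.colLen 0 + 1)).image fun i => (i, Y.rowLen i)).filter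
    fun c => ∀ d : ℕ × ℕ, d ≤ c → d ≠ c → d ∈ Y.cells

/-- Add a square to a Young diagram (when the result is again a Young diagram;
junk value `Y` otherwise). -/
def addBox (Y : YoungDiagram) (c : ℕ × ℕ) : YoungDiagram :=
  if h : c ∉ Y.cells ∧ ∀ d : ℕ × ℕ, d ≤ c → d ≠ c → d ∈ Y.cells then
    { cells := insert c Y.cells,
      isLowerSet := by
        intro a b hba ha
        simp only [Finset.coe_insert, Set.mem_insert_iff, Finset.mem_coe] at ha ⊢
        rcases ha with rfl | ha
        · by_cases hbc : b = a
          · exact Or.inl hbc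
          · exact Or.inr (h.2 b hba hbc)
        · exact Or.inr (Y.isLowerSet hba ha) }
  else Y

/-- The finset of squares removable from the Young diagram `Y`: the corners of `Y`. -/
def removables (Y : YoungDiagram) : Finset (ℕ × ℕ) :=
  Y.cells.filter fun c => (c.1 + 1, c.2) ∉ Y.cells ∧ (c.1, c.2 + 1) ∉ Y.cells

/-- Remove a square from a Young diagram (when the result is again a Young diagram;
junk value `Y` otherwise). -/
def removeBox (Y : YoungDiagram) (c : ℕ × ℕ) : YoungDiagram :=
  if h : (c.1 + 1, c.2) ∉ Y.cells ∧ (c.1, c.2 + 1) ∉ Y.cells then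
    { cells := Y.cells.erase c,
      isLowerSet := by
        intro a b hba ha
        rw [Finset.coe_erase, Set.mem_diff] at ha ⊢
        refine ⟨Y.isLowerSet hba ha.1, ?_⟩
        rintro rfl
        rcases lt_or_eq_of_le hba with hlt | rfl
        · rcases Prod.lt_iff.mp hlt with ⟨h1, h2⟩ | ⟨h1, h2⟩
          · exact h.1 (Y.isLowerSet (Prod.mk_le_mk.mpr ⟨h1, h2⟩) ha.1)
          · exact h.2 (Y.isLowerSet (Prod.mk_le_mk.mpr ⟨h1, h2⟩) ha.1)
        · exact ha.2 rfl }
  else Y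


/-- Rising factorial (Pochhammer symbol) `(a)_s = a(a+1)⋯(a+s−1)`. -/
def riseFac (a : ℂ) (s : ℕ) : ℂ := ∏ t ∈ Finset.range s, (a + t)

/-- Falling factorial `(a)_{↓s} = a(a−1)⋯(a−s+1)`. -/
def fallFac (a : ℂ) (s : ℕ) : ℂ := ∏ t ∈ Finset.range s, (a - t)

/-- The Gauss hypergeometric series `F(a,b;c;w) = Σ_{k≥0} (a)_k (b)_k / ((c)_k k!) · wᵏ`. -/
def gaussHyp (a b c w : ℂ) : ℂ :=
  ∑' k : ℕ, riseFac a k * riseFac b k / (riseFac c k * (k.factorial : ℂ)) * w ^ k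

/-- The matrix coefficient `⟨i|j⟩_{α,β,z,z'}`, i.e. the coefficient of `v_j` in
`e^{αU} e^{βD} v_i` for the `sl(2)`-action `U v_k = (z+k+1/2)v_{k+1}`,
`D v_k = (z'+k−1/2)v_{k−1}` on the module with basis `{v_k}_{k ∈ ℤ+1/2}`.
Half-integers are encoded by integers: `i = a + 1/2`, `j = b + 1/2` with `a, b ∈ ℤ`.
By definition
`⟨i|j⟩ = Σ_{s ≥ max(0,i−j)} (βˢ/s!)(z'+i−1/2)_{↓s} · (α^{j−i+s}/(j−i+s)!)(z+i−s+1/2)_{j−i+s}`,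
the terms with `j − i + s < 0` being absent. -/
def mcoef (α β z z' : ℂ) (a b : ℤ) : ℂ :=
  ∑' s : ℕ, if b - a + (s : ℤ) < 0 then 0 else
    (β ^ s / (s.factorial : ℂ)) * fallFac (z' + ((a : ℂ) + 1/2) - 1/2) s *
      (α ^ (b - a + (s : ℤ)).toNat / ((b - a + (s : ℤ)).toNat.factorial : ℂ)) *
      riseFac (z + ((a : ℂ) + 1/2) - s + 1/2) (b - a + (s : ℤ)).toNat

/-- The dual matrix coefficient `⟨i|j⟩*_{α,β,z,z'}`, i.e. the coefficient of `v*_j` in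
`e^{αU} e^{βD} v*_i` for the dual `sl(2)`-action `U v*_k = −(z+k−1/2)v*_{k−1}`,
`D v*_k = −(z'+k+1/2)v*_{k+1}`.  Half-integers are encoded as `i = a + 1/2`, `j = b + 1/2`.
By definition
`⟨i|j⟩* = Σ_{s ≥ max(0,j−i)} ((−β)ˢ/s!)(z'+i+1/2)_s · ((−α)^{i+s−j}/(i+s−j)!)(z+i+s−1/2)_{↓(i+s−j)}`,
the terms with `i + s − j < 0` being absent. -/
def mcoefStar (α β z z' : ℂ) (a b : ℤ) : ℂ :=
  ∑' s : ℕ, if a - b + (s : ℤ) < 0 then 0 else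
    ((-β) ^ s / (s.factorial : ℂ)) * riseFac (z' + ((a : ℂ) + 1/2) + 1/2) s *
      ((-α) ^ (a - b + (s : ℤ)).toNat / ((a - b + (s : ℤ)).toNat.factorial : ℂ)) *
      fallFac (z + ((a : ℂ) + 1/2) + s - 1/2) (a - b + (s : ℤ)).toNat

/-- The kernel `K(i,j) = Σ_{m ∈ ℤ_{<0}+1/2} ⟨i|m⟩_{α,β,z,z'} ⟨j|m⟩*_{α,β,z,z'}`, where the
negative half-integers `m = −1/2 − t` (`t ∈ ℕ`) are encoded by the integers `−1 − t`. -/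
def kerK (α β z z' : ℂ) (a b : ℤ) : ℂ :=
  ∑' t : ℕ, mcoef α β z z' a (-1 - (t : ℤ)) * mcoefStar α β z z' b (-1 - (t : ℤ))

/-- The mixed z-measure `M(λ) = (1−ξ)^{zz'} ξ^{|λ|} Π_{□∈λ}(z+c(□))(z'+c(□))/h(□)²`
with parameters `z, z' ∈ ℂ` and `ξ ∈ (0,1)`. -/
def mixedM (z z' : ℂ) (ξ : ℝ) (Y : YoungDiagram) : ℂ :=
  ((1 : ℂ) - (ξ : ℂ)) ^ (z * z') * (ξ : ℂ) ^ Y.card * zWeight z z' Y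

/-!
For `|ξ| < 1/2` the Pfaff transformation turns the matrix coefficients into convergent power series
in `ξ`, so that both `(1 - ξ) ^ (-z z') det K` and `(1 - ξ) ^ (-z z') ρ` are power series in `ξ`
whose coefficients are polynomials in `(z, z')`. As the pairs `(N, -M)` with `N, M` large are
Zariski dense in `ℂ²`, it is enough to compare the two series at `z = N`, `z' = -M`. There only the
diagrams contained in an `N × M` box have a nonzero weight. In terms of the positions of the `N`
particles this weight is a product of two complementary minors of a biorthogonal pair of
rectangular matrices, given by symmetric powers of `2 × 2` matrices, and the Cauchy–Binet formula
shows that such an ensemble is determinantal, with the product of the two matrices as its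
correlation kernel.
-/

section CauchyBinet

variable {R : Type*} [CommRing R] {N n : ℕ}

lemma det_mul_eq_sum_prod_mul_det_submatrix (A : Matrix (Fin N) (Fin n) R)
    (B : Matrix (Fin n) (Fin N) R) :
    (A * B).det = ∑ f : Fin N → Fin n, (∏ i, A i (f i)) * (B.submatrix f id).det := by
  have rows : A * B = fun i => ∑ j, A i j • B j := by
    ext i k
    simp [Matrix.mul_apply]
  calc (A * B).det
      = Matrix.detRowAlternating.toMultilinearMap (fun i => ∑ j, A i j • B j) := by rw [rows]; rfl
    _ = ∑ f : Fin N → Fin n, (∏ i, A i (f i)) * (B.submatrix f id).det := by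
      rw [MultilinearMap.map_sum]
      exact Finset.sum_congr rfl fun f _ => MultilinearMap.map_smul_univ _ _ _

lemma strictAnti_eq_of_range_eq {f g : Fin N → Fin n} (hf : StrictAnti f) (hg : StrictAnti g)
    (h : Set.range f = Set.range g) : f = g := by
  have rev : Fin.rev ∘ f = Fin.rev ∘ g :=
    (StrictMono.range_inj (Fin.rev_strictAnti.comp hf) (Fin.rev_strictAnti.comp hg)).mp (by
      rw [Set.range_comp, Set.range_comp, h])
  exact Fin.rev_injective.comp_left rev

lemma exists_strictAnti_comp_perm {f : Fin N → Fin n} (hf : Function.Injective f) :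
    ∃ (g : Fin N → Fin n) (σ : Equiv.Perm (Fin N)), StrictAnti g ∧ g ∘ σ = f := by
  have sorted : StrictMono (f ∘ Tuple.sort f) :=
    (Tuple.monotone_sort f).strictMono_of_injective (hf.comp (Tuple.sort f).injective)
  refine ⟨f ∘ Tuple.sort f ∘ Fin.rev, Fin.revPerm.trans (Tuple.sort f) |>.symm,
    sorted.comp_strictAnti Fin.rev_strictAnti, ?_⟩
  ext i
  simp

lemma sum_eq_sum_strictAnti_sum_perm {M : Type*} [AddCommMonoid M] (φ : (Fin N → Fin n) → M)
    (hφ : ∀ f, ¬ Function.Injective f → φ f = 0) :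
    ∑ f, φ f = ∑ f : Fin N → Fin n with StrictAnti f, ∑ σ : Equiv.Perm (Fin N), φ (f ∘ σ) := by
  rw [← Finset.sum_product', ← Finset.sum_filter_of_ne fun f _ hf => not_imp_comm.mp (hφ f) hf]
  symm
  refine Finset.sum_bij (fun q _ => q.1 ∘ q.2) ?_ ?_ ?_ fun _ _ => rfl
  · rintro ⟨f, σ⟩ hf
    simp only [Finset.mem_product, Finset.mem_filter, Finset.mem_univ, true_and, and_true] at hf ⊢
    exact hf.injective.comp σ.injective
  · rintro ⟨f, σ⟩ hf ⟨g, τ⟩ hg h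
    simp only [Finset.mem_product, Finset.mem_filter, Finset.mem_univ, true_and, and_true]
      at hf hg h
    obtain rfl : f = g := strictAnti_eq_of_range_eq hf hg (by
      simpa only [σ.surjective.range_comp, τ.surjective.range_comp] using congrArg Set.range h)
    rw [Equiv.ext fun i => hf.injective (congrFun h i)]
  · intro f hf
    obtain ⟨g, σ, hg, rfl⟩ := exists_strictAnti_comp_perm (Finset.mem_filter.mp hf).2
    exact ⟨(g, σ), by simpa using hg, rfl⟩

theorem det_mul_eq_sum_strictAnti (A : Matrix (Fin N) (Fin n) R) (B : Matrix (Fin n) (Fin N) R) :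
    (A * B).det = ∑ f : Fin N → Fin n with StrictAnti f,
      (A.submatrix id f).det * (B.submatrix f id).det := by
  rw [det_mul_eq_sum_prod_mul_det_submatrix, sum_eq_sum_strictAnti_sum_perm]
  · refine Finset.sum_congr rfl fun f _ => ?_
    rw [← Matrix.det_transpose (A.submatrix id f), Matrix.det_apply', Finset.sum_mul]
    refine Finset.sum_congr rfl fun σ _ => ?_
    rw [show B.submatrix (f ∘ σ) id = (B.submatrix f id).submatrix σ id from rfl,
      Matrix.det_permute]
    simp only [Matrix.transpose_apply, Matrix.submatrix_apply, id, Function.comp]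
    ring
  · intro f hf
    obtain ⟨i, j, hij, hne⟩ := Function.not_injective_iff.mp hf
    rw [Matrix.det_zero_of_row_eq hne (by ext k; simp [hij]), mul_zero]

end CauchyBinet

section ProjectionEnsemble

open Polynomial

variable {R : Type*} [CommRing R] {N n s : ℕ}

-- multiplying coordinate `k ∈ range x` by `1 + X` marks the points of `x` present in a subset
lemma sum_strictAnti_one_add_X_pow_mul_det_mul_det {G : Matrix (Fin n) (Fin N) R}
    {H : Matrix (Fin N) (Fin n) R} (hHG : H * G = 1) {x : Fin s → Fin n}
    (hx : Function.Injective x) :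
    ∑ f : Fin N → Fin n with StrictAnti f,
      (1 + X : R[X]) ^ (Finset.univ.filter fun i => f i ∈ Set.range x).card *
        C ((H.submatrix id f).det * (G.submatrix f id).det) =
      ((X : R[X]) • ((G * H).submatrix x x).map C + (1 : Matrix (Fin s) (Fin s) R).map C).det := by
  let d : Fin n → R[X] := fun k => if k ∈ Set.range x then 1 + X else 1
  have marked : H.map C * Matrix.diagonal d * G.map C =
      1 + ((X : R[X]) • (H.submatrix id x).map C) * (G.submatrix x id).map C := by
    have diagonal_eq : Matrix.diagonal d =
        1 + Matrix.diagonal fun k => if k ∈ Set.range x then X else 0 := by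
      rw [← Matrix.diagonal_one, Matrix.diagonal_add]
      congr 1; ext1 k; simp only [d]; split_ifs <;> simp
    rw [diagonal_eq, Matrix.mul_add, Matrix.mul_one, Matrix.add_mul, ← Matrix.map_mul, hHG,
      Matrix.map_one C C_0 C_1]
    congr 1
    ext1 i j
    have range_iff : ∀ k, k ∈ Set.range x ↔ k ∈ Finset.univ.image x := by simp
    rw [Matrix.mul_apply, Matrix.mul_apply]
    simp only [Matrix.mul_diagonal, Matrix.map_apply, Matrix.smul_apply, Matrix.submatrix_apply, id,
      smul_eq_mul, range_iff, mul_ite, ite_mul, mul_zero, zero_mul]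
    rw [Finset.sum_ite_mem, Finset.univ_inter, Finset.sum_image hx.injOn]
    exact Finset.sum_congr rfl fun p _ => by ring
  calc _ = (H.map C * Matrix.diagonal d * G.map C).det := by
        rw [det_mul_eq_sum_strictAnti]
        refine Finset.sum_congr rfl fun f _ => ?_
        have hH : ((H.map C * Matrix.diagonal d).submatrix id f).det =
            (∏ i, d (f i)) * C (H.submatrix id f).det := by
          rw [C.map_det, ← Matrix.det_mul_row]
          congr 1; ext1 i j; simp [mul_comm]
        have hG : ((G.map C).submatrix f id).det = C (G.submatrix f id).det := (C.map_det _).symm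
        rw [hH, hG, Finset.prod_ite]
        simp [mul_assoc]
    _ = _ := by
        rw [marked, Matrix.det_one_add_mul_comm, Matrix.mul_smul, ← Matrix.map_mul,
          Matrix.map_one C C_0 C_1, add_comm]
        rfl

lemma card_filter_mem_range_comm {ι κ α : Type*} [Fintype ι] [Fintype κ] {f : ι → α} {g : κ → α}
    [DecidablePred fun i => f i ∈ Set.range g] [DecidablePred fun j => g j ∈ Set.range f]
    (hf : Function.Injective f) (hg : Function.Injective g) :
    (Finset.univ.filter fun i => f i ∈ Set.range g).card =
      (Finset.univ.filter fun j => g j ∈ Set.range f).card := by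
  rw [← Finset.card_image_of_injective _ hf, ← Finset.card_image_of_injective _ hg]
  congr 1
  ext a
  simp only [Finset.mem_image, Finset.mem_filter, Finset.mem_univ, true_and, Set.mem_range]
  grind

theorem sum_strictAnti_det_mul_det_of_range_subset {G : Matrix (Fin n) (Fin N) R}
    {H : Matrix (Fin N) (Fin n) R} (hHG : H * G = 1) {x : Fin s → Fin n}
    (hx : Function.Injective x) :
    ∑ f : Fin N → Fin n with StrictAnti f ∧ Set.range x ⊆ Set.range f,
      (H.submatrix id f).det * (G.submatrix f id).det = ((G * H).submatrix x x).det := by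
  rw [← Finset.filter_filter, Finset.sum_filter]
  have key := congrArg (fun q => coeff q s) (sum_strictAnti_one_add_X_pow_mul_det_mul_det hHG hx)
  rw [finsetSum_coeff] at key
  have top := coeff_det_X_add_C_card ((G * H).submatrix x x) (1 : Matrix (Fin s) (Fin s) R)
  rw [Fintype.card_fin] at top
  rw [← top, ← key]
  refine Finset.sum_congr rfl fun f hf => ?_
  have all_marked : (Finset.univ.filter fun p => x p ∈ Set.range f).card = s ↔
      Set.range x ⊆ Set.range f := by
    simpa [Set.range_subset_iff] using
      Finset.card_filter_eq_iff (s := (Finset.univ : Finset (Fin s)))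
        (p := fun p => x p ∈ Set.range f)
  have card_le : (Finset.univ.filter fun p => x p ∈ Set.range f).card ≤ s := by
    simpa using Finset.card_filter_le (Finset.univ : Finset (Fin s)) fun p => x p ∈ Set.range f
  rw [coeff_mul_C, coeff_one_add_X_pow, ← all_marked,
    card_filter_mem_range_comm (Finset.mem_filter.mp hf).2.injective hx]
  split_ifs with h
  · rw [h, Nat.choose_self, Nat.cast_one, one_mul]
  · rw [Nat.choose_eq_zero_of_lt (lt_of_le_of_ne card_le h), Nat.cast_zero, zero_mul]

end ProjectionEnsemble

lemma det_mem_of_forall_mem {A : Type*} [CommRing A] (S : Subring A) {s : ℕ}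
    {M : Matrix (Fin s) (Fin s) A} (h : ∀ i j, M i j ∈ S) : M.det ∈ S := by
  rw [Matrix.det_apply]
  exact sum_mem fun σ _ => zsmul_mem (prod_mem fun i _ => h _ _) _

section Binomials

lemma fallFac_succ (a : ℂ) (n : ℕ) : fallFac a (n + 1) = fallFac a n * (a - n) :=
  Finset.prod_range_succ _ _

lemma smeval_descPochhammer (a : ℂ) (n : ℕ) : (descPochhammer ℤ n).smeval a = fallFac a n := by
  induction n with
  | zero => simp [fallFac]
  | succ n ih =>
    rw [fallFac_succ, ← ih, descPochhammer_succ_right, Polynomial.smeval_mul,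
      Polynomial.smeval_sub, Polynomial.smeval_X, Polynomial.smeval_natCast]
    simp

lemma ringChoose_eq_fallFac_div_factorial (a : ℂ) (n : ℕ) :
    Ring.choose a n = fallFac a n / n.factorial := by
  rw [eq_div_iff (by exact_mod_cast n.factorial_ne_zero), ← smeval_descPochhammer,
    Ring.descPochhammer_eq_factorial_smul_choose, nsmul_eq_mul, mul_comm]

end Binomials

section Series

open PowerSeries

lemma coeff_mul_mul_pow (f g : ℂ⟦X⟧) (x : ℂ) (n : ℕ) :
    coeff n (f * g) * x ^ n = ∑ p ∈ Finset.HasAntidiagonal.antidiagonal n,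
      (coeff p.1 f * x ^ p.1) * (coeff p.2 g * x ^ p.2) := by
  rw [coeff_mul, Finset.sum_mul]
  refine Finset.sum_congr rfl fun p hp => ?_
  rw [← Finset.HasAntidiagonal.mem_antidiagonal.mp hp, pow_add]
  ring

/-- The pairs `(f, v)` such that the power series `f` converges absolutely at `x` with sum `v`.
Since they form a ring, evaluation at `x` commutes with determinants. -/
def absConvergentAt (x : ℂ) : Subring (ℂ⟦X⟧ × ℂ) where
  carrier := {p | (Summable fun n => ‖coeff n p.1 * x ^ n‖) ∧ ∑' n, coeff n p.1 * x ^ n = p.2}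
  mul_mem' := by
    rintro p q ⟨hf, hv⟩ ⟨hg, hw⟩
    refine ⟨?_, ?_⟩
    · simpa only [Prod.fst_mul, coeff_mul_mul_pow] using
        summable_norm_sum_mul_antidiagonal_of_summable_norm hf hg
    · simpa only [Prod.fst_mul, Prod.snd_mul, coeff_mul_mul_pow, hv, hw] using
        (tsum_mul_tsum_eq_tsum_sum_antidiagonal_of_summable_norm hf hg).symm
  one_mem' := by
    have single : ∀ n ≠ 0, coeff n (1 : ℂ⟦X⟧) * x ^ n = 0 := fun n hn => by simp [coeff_one, hn]
    refine ⟨summable_of_ne_finset_zero (s := {0}) fun n hn => ?_, ?_⟩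
    · exact norm_eq_zero.mpr (single n (by simpa using hn))
    · exact (tsum_eq_single 0 single).trans (by simp)
  add_mem' := by
    rintro p q ⟨hf, hv⟩ ⟨hg, hw⟩
    refine ⟨?_, ?_⟩
    · refine (hf.add hg).of_nonneg_of_le (fun _ => norm_nonneg _) fun n => ?_
      simpa only [Prod.fst_add, map_add, add_mul] using norm_add_le _ _
    · simpa only [Prod.fst_add, Prod.snd_add, map_add, add_mul, hv, hw] using
        hf.of_norm.tsum_add hg.of_norm
  zero_mem' := by simp [summable_zero]
  neg_mem' := by
    rintro p ⟨hf, hv⟩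
    exact ⟨by simpa using hf, by simpa [tsum_neg] using hv⟩

variable {x : ℂ}

lemma mem_absConvergentAt_unique {f : ℂ⟦X⟧} {v w : ℂ} (hv : (f, v) ∈ absConvergentAt x)
    (hw : (f, w) ∈ absConvergentAt x) : v = w :=
  hv.2.symm.trans hw.2

lemma det_mem_absConvergentAt {s : ℕ} {F : Matrix (Fin s) (Fin s) ℂ⟦X⟧}
    {V : Matrix (Fin s) (Fin s) ℂ} (h : ∀ i j, (F i j, V i j) ∈ absConvergentAt x) :
    (F.det, V.det) ∈ absConvergentAt x := by
  let P : Matrix (Fin s) (Fin s) (ℂ⟦X⟧ × ℂ) := fun i j => (F i j, V i j)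
  have det_eq : P.det = (F.det, V.det) :=
    Prod.ext ((RingHom.fst ℂ⟦X⟧ ℂ).map_det P) ((RingHom.snd ℂ⟦X⟧ ℂ).map_det P)
  exact det_eq ▸ det_mem_of_forall_mem _ h

lemma mk_sum_mem_absConvergentAt {ι : Type*} {c : ι → ℂ} {g : ι → ℕ} {S : ℕ → Finset ι}
    (hS : ∀ n, ∀ i ∈ S n, g i = n) (hc : ∀ i, c i ≠ 0 → i ∈ S (g i))
    (h : Summable fun i => ‖c i * x ^ g i‖) :
    (mk fun n => ∑ i ∈ S n, c i, ∑' i, c i * x ^ g i) ∈ absConvergentAt x := by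
  have fiber : ∀ n, ∑' i : g ⁻¹' {n}, c i * x ^ g i = (∑ i ∈ S n, c i) * x ^ n := fun n => by
    rw [tsum_subtype (g ⁻¹' {n}) fun i => c i * x ^ g i, tsum_eq_sum (s := S n), Finset.sum_mul]
    · refine Finset.sum_congr rfl fun i hi => ?_
      rw [Set.indicator_of_mem (by simpa using hS n i hi), hS n i hi]
    · intro i hi
      refine Set.indicator_apply_eq_zero.mpr fun (hg : g i = n) => ?_
      rw [not_not.mp (mt (hc i) (hg ▸ hi)), zero_mul]
  have sums := h.of_norm.hasSum.tsum_fiberwise g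
  simp only [fiber] at sums
  refine ⟨?_, by simpa using sums.tsum_eq⟩
  simpa using sums.summable.norm

lemma rescale_neg_one_binomialSeries_mem_absConvergentAt (hx : ‖x‖ < 1) (e : ℂ) :
    (rescale (-1 : ℂ) (binomialSeries ℂ e), (1 - x) ^ e) ∈ absConvergentAt x := by
  have sum : HasSum (fun n => coeff n (rescale (-1 : ℂ) (binomialSeries ℂ e)) * x ^ n)
      ((1 - x) ^ e) := by
    have newton := (Complex.one_add_cpow_hasFPowerSeriesOnBall_zero (a := e)).hasSum (y := -x) (by
      rw [Metric.mem_eball, edist_zero_right, ← ofReal_norm, norm_neg]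
      exact ENNReal.ofReal_lt_one.mpr hx)
    simp only [binomialSeries_apply, zero_add, smul_eq_mul, List.ofFn_const,
      List.prod_replicate] at newton
    rw [sub_eq_add_neg]
    refine newton.congr_fun fun n => ?_
    rw [coeff_rescale, binomialSeries_coeff, neg_pow x, smul_eq_mul]
    ring
  exact ⟨sum.summable.norm, sum.tsum_eq⟩

theorem eq_of_forall_Ioo_mem_absConvergentAt {f g : ℂ⟦X⟧} {r : ℝ} (hr : 0 < r) {v : ℝ → ℂ}
    (hf : ∀ ξ ∈ Set.Ioo 0 r, (f, v ξ) ∈ absConvergentAt ξ)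
    (hg : ∀ ξ ∈ Set.Ioo 0 r, (g, v ξ) ∈ absConvergentAt ξ) : f = g := by
  have vanish : ∀ ξ ∈ Set.Ioo 0 r, (f - g, 0) ∈ absConvergentAt ξ := fun ξ hξ => by
    simpa using sub_mem (hf ξ hξ) (hg ξ hξ)
  let P := FormalMultilinearSeries.ofScalars ℂ fun n => coeff n (f - g)
  have radius_pos : 0 < P.radius := by
    have half : r / 2 ∈ Set.Ioo 0 r := ⟨by linarith, by linarith⟩
    refine lt_of_lt_of_le (ENNReal.coe_pos.mpr (Real.toNNReal_pos.mpr half.1))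
      (P.le_radius_of_summable ?_)
    simpa [P, half.1.le, hr.le, abs_of_pos hr] using (vanish _ half).1
  have analytic := (P.hasFPowerSeriesOnBall radius_pos).analyticAt
  have sum_eq_zero : ∀ᶠ ξ in nhdsWithin (0 : ℝ) (Set.Ioi 0), P.sum (Complex.ofReal ξ) = 0 := by
    filter_upwards [Ioo_mem_nhdsGT hr] with ξ hξ
    simpa [P, FormalMultilinearSeries.sum, mul_comm] using (vanish ξ hξ).2
  have toComplex : Filter.Tendsto (fun ξ : ℝ => (ξ : ℂ)) (nhdsWithin 0 (Set.Ioi 0))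
      (nhdsWithin (0 : ℂ) {0}ᶜ) := by
    refine tendsto_nhdsWithin_iff.mpr
      ⟨(Complex.continuous_ofReal.tendsto' 0 0 rfl).mono_left nhdsWithin_le_nhds, ?_⟩
    filter_upwards [self_mem_nhdsWithin] with ξ (hξ : 0 < ξ)
    simpa using hξ.ne'
  have P_zero : P = 0 :=
    (P.hasFPowerSeriesOnBall radius_pos).hasFPowerSeriesAt.eq_zero_of_eventually
      (analytic.frequently_zero_iff_eventually_zero.mp
        (toComplex.frequently sum_eq_zero.frequently))
  rw [← sub_eq_zero]
  ext n
  exact congrFun ((FormalMultilinearSeries.ofScalars_series_eq_zero ℂ).mp P_zero) n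

end Series

section PolynomialFamilies

open PowerSeries

/-- Polynomial functions of the pair of parameters `(z, z')`. -/
def parameterPolynomials : Subalgebra ℂ (ℂ × ℂ → ℂ) :=
  (MvPolynomial.aeval ![Prod.fst, Prod.snd] : MvPolynomial (Fin 2) ℂ →ₐ[ℂ] ℂ × ℂ → ℂ).range

lemma fst_mem_parameterPolynomials : (Prod.fst : ℂ × ℂ → ℂ) ∈ parameterPolynomials :=
  ⟨MvPolynomial.X 0, by simp⟩

lemma snd_mem_parameterPolynomials : (Prod.snd : ℂ × ℂ → ℂ) ∈ parameterPolynomials :=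
  ⟨MvPolynomial.X 1, by simp⟩

lemma eq_of_mem_parameterPolynomials {f g : ℂ × ℂ → ℂ} (hf : f ∈ parameterPolynomials)
    (hg : g ∈ parameterPolynomials) (K : ℕ)
    (h : ∀ N ≥ K, ∀ M ≥ K, f ((N : ℂ), -(M : ℂ)) = g ((N : ℂ), -(M : ℂ))) : f = g := by
  obtain ⟨P, rfl⟩ := hf
  obtain ⟨Q, rfl⟩ := hg
  have eval_eq : ∀ (P : MvPolynomial (Fin 2) ℂ) (p : ℂ × ℂ),
      MvPolynomial.aeval ![Prod.fst, Prod.snd] P p = MvPolynomial.eval ![p.1, p.2] P := by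
    intro P p
    induction P using MvPolynomial.induction_on with
    | C a => simp
    | add P Q hP hQ => simp_all
    | mul_X P i hP => fin_cases i <;> simp_all
  have infinite : ((fun N : ℕ => (N : ℂ)) '' Set.Ici K).Infinite :=
    (Set.Ici_infinite K).image Nat.cast_injective.injOn
  congr 1
  refine MvPolynomial.funext_set ![(fun N : ℕ => (N : ℂ)) '' Set.Ici K,
    (fun w => -w) '' ((fun N : ℕ => (N : ℂ)) '' Set.Ici K)] ?_ fun y hy => ?_
  · exact Fin.forall_fin_two.mpr ⟨infinite, infinite.image neg_injective.injOn⟩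
  · obtain ⟨⟨N, hN, hy0⟩, ⟨_, ⟨M, hM, rfl⟩, hy1⟩⟩ := Fin.forall_fin_two.mp fun i => hy i trivial
    have y_eq : y = ![(N : ℂ), -(M : ℂ)] := by
      ext i; fin_cases i
      exacts [hy0.symm, hy1.symm]
    simpa [eval_eq, y_eq] using h N hN M hM

/-- Families of power series indexed by `(z, z')` all of whose coefficients are polynomial
in `(z, z')`. -/
def polynomialSeries : Subring (ℂ × ℂ → ℂ⟦X⟧) where
  carrier := {F | ∀ n, (fun p => coeff n (F p)) ∈ parameterPolynomials}
  mul_mem' := by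
    intro F G hF hG n
    have : (fun p => coeff n ((F * G) p)) = ∑ k ∈ Finset.HasAntidiagonal.antidiagonal n,
        (fun p => coeff k.1 (F p)) * fun p => coeff k.2 (G p) := by
      ext p; simp [coeff_mul]
    exact this ▸ sum_mem fun k _ => mul_mem (hF _) (hG _)
  one_mem' n := by
    exact algebraMap_mem parameterPolynomials (coeff n (1 : ℂ⟦X⟧))
  add_mem' hF hG n := by simpa using! add_mem (hF n) (hG n)
  zero_mem' n := by simpa using! zero_mem _
  neg_mem' {F} hF n := by
    have : (fun p => coeff n ((-F) p)) = -fun p => coeff n (F p) := by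
      ext p; simp
    exact this ▸ neg_mem (hF n)

theorem eq_of_mem_polynomialSeries {F G : ℂ × ℂ → ℂ⟦X⟧} (hF : F ∈ polynomialSeries)
    (hG : G ∈ polynomialSeries) (K : ℕ)
    (h : ∀ N ≥ K, ∀ M ≥ K, F ((N : ℂ), -(M : ℂ)) = G ((N : ℂ), -(M : ℂ))) : F = G := by
  ext p n
  exact congrFun (eq_of_mem_parameterPolynomials (hF n) (hG n) K fun N hN M hM =>
    congrArg (coeff n) (h N hN M hM)) p

lemma det_mem_polynomialSeries {s : ℕ} {F : Matrix (Fin s) (Fin s) (ℂ × ℂ → ℂ⟦X⟧)}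
    (h : ∀ i j, F i j ∈ polynomialSeries) :
    (fun p => (Matrix.of fun i j => F i j p).det) ∈ polynomialSeries := by
  have det_eq : F.det = fun p => (Matrix.of fun i j => F i j p).det := by
    ext1 p
    exact (Pi.evalRingHom (fun _ : ℂ × ℂ => ℂ⟦X⟧) p).map_det F
  exact det_eq ▸ det_mem_of_forall_mem _ h

lemma ringChoose_mem_parameterPolynomials {f : ℂ × ℂ → ℂ} (hf : f ∈ parameterPolynomials) (n : ℕ) :
    (fun p => Ring.choose (f p) n) ∈ parameterPolynomials := by
  have falling : (fun p => fallFac (f p) n) ∈ parameterPolynomials := by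
    have : (fun p => fallFac (f p) n) = ∏ t ∈ Finset.range n, (f - algebraMap ℂ _ (t : ℂ)) := by
      ext p; simp [fallFac]
    exact this ▸ prod_mem fun t _ => sub_mem hf (algebraMap_mem _ _)
  have : (fun p => Ring.choose (f p) n) = (n.factorial : ℂ)⁻¹ • fun p => fallFac (f p) n := by
    ext p; simp [ringChoose_eq_fallFac_div_factorial, div_eq_inv_mul]
  exact this ▸ Subalgebra.smul_mem _ falling _

end PolynomialFamilies

section IntegerLowerIndex

lemma riseFac_eq_fallFac (a : ℂ) (n : ℕ) : riseFac a n = fallFac (a + n - 1) n := by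
  rw [riseFac, fallFac, ← Finset.prod_range_reflect]
  refine Finset.prod_congr rfl fun t ht => ?_
  rw [Nat.sub_sub, Nat.cast_sub (by grind)]
  push_cast
  ring

lemma riseFac_eq_neg_one_pow_mul_fallFac_neg (a : ℂ) (n : ℕ) :
    riseFac a n = (-1) ^ n * fallFac (-a) n := by
  have factors : ∀ t ∈ Finset.range n, a + t = -1 * (-a - t) := fun _ _ => by ring
  rw [riseFac, fallFac, Finset.prod_congr rfl factors, Finset.prod_mul_distrib, Finset.prod_const,
    Finset.card_range]

lemma fallFac_add (a : ℂ) (m l : ℕ) : fallFac a (m + l) = fallFac a m * fallFac (a - m) l := by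
  simp [fallFac, Finset.prod_range_add, sub_sub]

lemma ringChoose_add_natCast (a : ℂ) (n : ℕ) :
    Ring.choose (a + n) n = (-1) ^ n * Ring.choose (-(a + 1)) n := by
  rw [ringChoose_eq_fallFac_div_factorial, ringChoose_eq_fallFac_div_factorial, ← mul_div_assoc,
    ← riseFac_eq_neg_one_pow_mul_fallFac_neg, riseFac_eq_fallFac]
  ring_nf

lemma norm_ringChoose_le {a : ℂ} {m : ℕ} (ha : ‖a‖ ≤ m + 1) (n : ℕ) :
    ‖Ring.choose a n‖ ≤ (n + m).choose m := by
  rw [ringChoose_eq_fallFac_div_factorial, norm_div, Complex.norm_natCast,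
    div_le_iff₀ (by positivity), add_comm n m, ← Nat.cast_mul, Nat.choose_symm_add, mul_comm,
    ← Nat.ascFactorial_eq_factorial_mul_choose, Nat.ascFactorial_eq_prod_range, fallFac, norm_prod]
  push_cast
  gcongr with t
  simpa using (norm_sub_le a t).trans (by simpa using ha)

/-- The binomial coefficient `C(P, k)` with integer lower index, zero for `k < 0`. -/
def intChoose (P : ℂ) (k : ℤ) : ℂ := if k < 0 then 0 else Ring.choose P k.toNat

lemma intChoose_of_neg (P : ℂ) {k : ℤ} (hk : k < 0) : intChoose P k = 0 := if_pos hk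

lemma intChoose_natCast (P : ℂ) (n : ℕ) : intChoose P n = Ring.choose P n := by
  simp [intChoose]

lemma intChoose_add_mul_ringChoose (P : ℂ) (k : ℤ) (i l : ℕ) :
    intChoose P (k + i) * Ring.choose (P - k - i) l =
      intChoose P (k + (i + l : ℕ)) * Ring.choose ((k : ℂ) + (i + l : ℕ)) l := by
  rcases lt_or_ge (k + i) 0 with neg | nonneg
  · rw [intChoose_of_neg P neg, zero_mul, eq_comm, mul_eq_zero]
    refine (lt_or_ge (k + (i + l : ℕ)) 0).imp (intChoose_of_neg P) fun h => ?_
    obtain ⟨m, hm⟩ := Int.eq_ofNat_of_zero_le h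
    rw [show (k : ℂ) + (i + l : ℕ) = m by exact_mod_cast hm, Ring.choose_natCast,
      Nat.choose_eq_zero_of_lt (by grind), Nat.cast_zero]
  · obtain ⟨m, hm⟩ := Int.eq_ofNat_of_zero_le nonneg
    have lower : k + (i + l : ℕ) = (m + l : ℕ) := by grind
    rw [show P - k - i = P - m by rw [sub_sub]; congr 1; exact_mod_cast hm,
      show (k : ℂ) + (i + l : ℕ) = (m + l : ℕ) by exact_mod_cast lower, hm, lower,
      intChoose_natCast, intChoose_natCast, Ring.choose_natCast]
    simp only [ringChoose_eq_fallFac_div_factorial, fallFac_add,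
      Nat.cast_choose ℂ (Nat.le_add_left l m), Nat.add_sub_cancel]
    have := fun n : ℕ => (Nat.cast_ne_zero (R := ℂ)).mpr n.factorial_ne_zero
    field_simp [this]

end IntegerLowerIndex

section Growth

lemma exists_norm_ringChoose_le (P : ℂ) {q : ℝ} (hq : 1 < q) :
    ∃ C ≥ 0, ∀ n, ‖Ring.choose P n‖ ≤ C * q ^ n := by
  have hx : ‖(((-q⁻¹ : ℝ)) : ℂ)‖ < 1 := by
    rw [Complex.norm_real, norm_neg, Real.norm_of_nonneg (by positivity)]
    exact inv_lt_one_of_one_lt₀ hq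
  have summable := (rescale_neg_one_binomialSeries_mem_absConvergentAt hx P).1
  obtain ⟨C, hC⟩ := summable.tendsto_atTop_zero.bddAbove_range
  refine ⟨C, (norm_nonneg _).trans (hC ⟨0, rfl⟩), fun n => ?_⟩
  rw [← div_le_iff₀ (by positivity)]
  refine le_trans (le_of_eq ?_) (hC ⟨n, rfl⟩)
  simp [PowerSeries.coeff_rescale, PowerSeries.binomialSeries_coeff, abs_of_pos (one_pos.trans hq),
    div_eq_mul_inv]

lemma exists_norm_intChoose_le (P : ℂ) {q : ℝ} (hq : 1 < q) :
    ∃ C ≥ 0, ∀ k : ℤ, ‖intChoose P k‖ ≤ C * q ^ k := by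
  obtain ⟨C, hC, bound⟩ := exists_norm_ringChoose_le P hq
  refine ⟨C, hC, fun k => ?_⟩
  rcases lt_or_ge k 0 with neg | nonneg
  · rw [intChoose_of_neg P neg, norm_zero]; positivity
  · obtain ⟨n, rfl⟩ := Int.eq_ofNat_of_zero_le nonneg
    simpa [intChoose_natCast] using bound n

lemma exists_norm_intChoose_mul_ringChoose_le (P Q : ℂ) {q : ℝ} (hq : 1 < q) :
    ∃ C ≥ 0, ∀ (k : ℤ) (i : ℕ),
      ‖intChoose P (k + i) * Ring.choose Q i‖ ≤ C * q ^ k * (q * q) ^ i := by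
  obtain ⟨C, hC, bound⟩ := exists_norm_intChoose_le P hq
  obtain ⟨D, hD, bound'⟩ := exists_norm_ringChoose_le Q hq
  refine ⟨C * D, by positivity, fun k i => ?_⟩
  calc _ ≤ (C * q ^ (k + i)) * (D * q ^ i) := by
        rw [norm_mul]
        exact mul_le_mul (bound _) (bound' _) (norm_nonneg _) (by positivity)
    _ = _ := by rw [zpow_add₀ (by positivity), zpow_natCast, mul_pow]; ring

lemma exists_one_lt_mul_le_sq {r : ℝ} (h0 : 0 ≤ r) (h1 : r < 1) :
    ∃ q ρ : ℝ, 1 < q ∧ 0 < ρ ∧ ρ < 1 ∧ q * q * r ≤ ρ * ρ := by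
  have sqrt_lt : √r < 1 := by simpa using Real.sqrt_lt_sqrt h0 h1
  have sqrt_nonneg := Real.sqrt_nonneg r
  refine ⟨(3 - √r) / 2, (1 + √r) / 2, by linarith, by linarith, by linarith, ?_⟩
  have le : (3 - √r) / 2 * √r ≤ (1 + √r) / 2 := by nlinarith [sq_nonneg (1 - √r)]
  calc _ = ((3 - √r) / 2 * √r) * ((3 - √r) / 2 * √r) := by
        nth_rw 3 [← Real.mul_self_sqrt h0]; ring
    _ ≤ _ := mul_self_le_mul_self (mul_nonneg (by linarith) sqrt_nonneg) le

end Growth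

section Pfaff

open PowerSeries

/-- The series `∑ C(P, k + i) C(Q, i) Xⁱ`, a multiple of `₂F₁(k - P, -Q; k + 1; X)` when `k ≥ 0`. -/
def gaussSeries (P Q : ℂ) (k : ℤ) : ℂ⟦X⟧ :=
  mk fun i => intChoose P (k + i) * Ring.choose Q i

variable {x : ℂ}

lemma exists_norm_coeff_gaussSeries_mul_pow_le (P Q : ℂ) {q ρ : ℝ} (hq : 1 < q)
    (hρ : q * q * ‖x‖ ≤ ρ * ρ) :
    ∃ C ≥ 0, ∀ k i, ‖coeff i (gaussSeries P Q k) * x ^ i‖ ≤ C * q ^ k * (ρ * ρ) ^ i := by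
  obtain ⟨C, hC, bound⟩ := exists_norm_intChoose_mul_ringChoose_le P Q hq
  refine ⟨C, hC, fun k i => ?_⟩
  calc _ ≤ C * q ^ k * (q * q) ^ i * ‖x‖ ^ i := by
        rw [gaussSeries, coeff_mk, norm_mul, norm_pow]
        gcongr
        exact bound k i
    _ = C * q ^ k * (q * q * ‖x‖) ^ i := by rw [mul_pow _ ‖x‖]; ring
    _ ≤ _ := by gcongr

lemma summable_coeff_gaussSeries (P Q : ℂ) (k : ℤ) (hx : ‖x‖ < 1) :
    Summable fun i => ‖coeff i (gaussSeries P Q k) * x ^ i‖ := by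
  obtain ⟨q, ρ, hq, h0, h1, hρ⟩ := exists_one_lt_mul_le_sq (norm_nonneg x) hx
  obtain ⟨C, -, bound⟩ := exists_norm_coeff_gaussSeries_mul_pow_le P Q hq hρ
  have geometric := summable_geometric_of_lt_one (mul_self_nonneg ρ)
    (mul_lt_one_of_nonneg_of_lt_one_left h0.le h1 h1.le)
  exact (geometric.mul_left (C * q ^ k)).of_nonneg_of_le (fun _ => norm_nonneg _) (bound k)

lemma sum_antidiagonal_gaussSeries (P Q : ℂ) (k : ℤ) (n : ℕ) :
    ∑ p ∈ Finset.HasAntidiagonal.antidiagonal n,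
        coeff p.1 (gaussSeries P Q k) * Ring.choose (P - k - p.1) p.2 =
      (-1) ^ n * coeff n (gaussSeries P (-(k + Q + 1)) k) := by
  have vandermonde := Ring.add_choose_eq n (Commute.all Q (k + n : ℂ))
  rw [← add_assoc, ringChoose_add_natCast] at vandermonde
  rw [gaussSeries, gaussSeries, coeff_mk, mul_left_comm, show -(k + Q + 1) = -(Q + k + 1) by ring,
    vandermonde, Finset.mul_sum]
  refine Finset.sum_congr rfl fun p hp => ?_
  obtain rfl := Finset.HasAntidiagonal.mem_antidiagonal.mp hp
  rw [coeff_mk, mul_right_comm, intChoose_add_mul_ringChoose]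
  ring

lemma norm_ringChoose_mul_pow_le {a : ℂ} {m : ℕ} (ha : ‖a‖ ≤ m + 1) (x : ℂ) (l : ℕ) :
    ‖Ring.choose a l * x ^ l‖ ≤ (l + m).choose m * ‖x‖ ^ l := by
  rw [norm_mul, norm_pow]
  gcongr
  exact norm_ringChoose_le ha l

lemma summable_norm_ringChoose_mul_pow (a : ℂ) (hx : ‖x‖ < 1) :
    Summable fun l => ‖Ring.choose a l * x ^ l‖ := by
  obtain ⟨m, hm⟩ := exists_nat_ge ‖a‖
  exact (summable_choose_mul_geometric_of_norm_lt_one m (by rwa [norm_norm])).of_nonneg_of_le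
    (fun _ => norm_nonneg _) (norm_ringChoose_mul_pow_le (by linarith) x)

lemma tsum_norm_ringChoose_mul_pow_le {a : ℂ} {m : ℕ} (ha : ‖a‖ ≤ m + 1) (hx : ‖x‖ < 1) :
    ∑' l, ‖Ring.choose a l * x ^ l‖ ≤ 1 / (1 - ‖x‖) ^ (m + 1) := by
  have hx' : ‖‖x‖‖ < 1 := by rwa [norm_norm]
  exact ((summable_norm_ringChoose_mul_pow a hx).tsum_le_tsum (norm_ringChoose_mul_pow_le ha x)
    (summable_choose_mul_geometric_of_norm_lt_one m hx')).trans_eq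
      (tsum_choose_mul_geometric_of_norm_lt_one m hx')

lemma exists_norm_coeff_gaussSeries_mul_tsum_le (P Q : ℂ) (k : ℤ) (hx : ‖x‖ < 1 / 2) :
    ∃ C r : ℝ, 0 ≤ r ∧ r < 1 ∧ ∀ i, ‖coeff i (gaussSeries P Q k) * x ^ i‖ *
      ∑' l, ‖Ring.choose (P - k - i) l * x ^ l‖ ≤ C * r ^ i := by
  obtain ⟨m, hm⟩ := exists_nat_ge ‖P - k‖
  have h1 : 0 < 1 - ‖x‖ := by linarith
  obtain ⟨q, ρ, hq, h0, hρ1, hρ⟩ := exists_one_lt_mul_le_sq (r := ‖x‖ / (1 - ‖x‖)) (by positivity)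
    (by rw [div_lt_one h1]; linarith)
  have hρ' : q * q * ‖x / (1 - ‖x‖ : ℝ)‖ ≤ ρ * ρ := by
    rwa [norm_div, Complex.norm_real, Real.norm_of_nonneg h1.le]
  obtain ⟨C, -, bound⟩ := exists_norm_coeff_gaussSeries_mul_pow_le P Q hq hρ'
  refine ⟨C * q ^ k * (1 / (1 - ‖x‖) ^ (m + 1)), ρ * ρ, by positivity,
    mul_lt_one_of_nonneg_of_lt_one_left h0.le hρ1 hρ1.le, fun i => ?_⟩
  have norm_le : ‖P - k - i‖ ≤ (m + i : ℕ) + 1 := by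
    have := (norm_sub_le (P - k) i).trans_eq (by rw [Complex.norm_natCast])
    push_cast
    linarith
  calc _ ≤ ‖coeff i (gaussSeries P Q k) * x ^ i‖ * (1 / (1 - ‖x‖) ^ (m + i + 1)) := by
        gcongr
        exact tsum_norm_ringChoose_mul_pow_le norm_le (by linarith)
    _ = ‖coeff i (gaussSeries P Q k) * (x / (1 - ‖x‖ : ℝ)) ^ i‖ * (1 / (1 - ‖x‖) ^ (m + 1)) := by
        rw [div_pow, ← mul_div_assoc _ _ (_ ^ i), norm_div, norm_pow (Complex.ofReal _),
          Complex.norm_real, Real.norm_of_nonneg h1.le]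
        field_simp
        ring
    _ ≤ _ := by
        rw [mul_right_comm]
        gcongr
        exact bound k i

lemma summable_gaussSeries_mul_ringChoose (P Q : ℂ) (k : ℤ) (hx : ‖x‖ < 1 / 2) :
    Summable fun p : ℕ × ℕ =>
      ‖coeff p.1 (gaussSeries P Q k) * Ring.choose (P - k - p.1) p.2 * x ^ (p.1 + p.2)‖ := by
  obtain ⟨C, r, h0, h1, bound⟩ := exists_norm_coeff_gaussSeries_mul_tsum_le P Q k hx
  have split : ∀ p : ℕ × ℕ,
      ‖coeff p.1 (gaussSeries P Q k) * Ring.choose (P - k - p.1) p.2 * x ^ (p.1 + p.2)‖ =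
        ‖coeff p.1 (gaussSeries P Q k) * x ^ p.1‖ * ‖Ring.choose (P - k - p.1) p.2 * x ^ p.2‖ :=
    fun p => by rw [← norm_mul, pow_add, mul_mul_mul_comm]
  rw [summable_congr split,
    summable_prod_of_nonneg fun _ => mul_nonneg (norm_nonneg _) (norm_nonneg _)]
  refine ⟨fun i => ?_, ?_⟩ <;> dsimp only
  · exact (summable_norm_ringChoose_mul_pow _ (by linarith)).mul_left _
  simp only [tsum_mul_left]
  exact ((summable_geometric_of_lt_one h0 h1).mul_left C).of_nonneg_of_le
    (fun _ => by positivity) bound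

theorem tsum_gaussSeries_div_sub_one (P Q : ℂ) (k : ℤ) (hx : ‖x‖ < 1 / 2) :
    ∑' i, coeff i (gaussSeries P Q k) * (x / (x - 1)) ^ i =
      (1 - x) ^ (k - P) * ∑' i, coeff i (gaussSeries P (-(k + Q + 1)) k) * x ^ i := by
  have h1 : 1 - x ≠ 0 := fun h => by
    rw [← sub_eq_zero.mp h, norm_one] at hx
    norm_num at hx
  have hx1 : ‖x‖ < 1 := by linarith
  let c : ℕ × ℕ → ℂ := fun p => coeff p.1 (gaussSeries P Q k) * Ring.choose (P - k - p.1) p.2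
  have summable : Summable fun p : ℕ × ℕ => ‖c p * (-x) ^ (p.1 + p.2)‖ :=
    summable_gaussSeries_mul_ringChoose P Q k ((norm_neg x).trans_lt hx)
  have sum_rows : ∀ i : ℕ, ∑' l, c (i, l) * (-x) ^ (i + l) =
      coeff i (gaussSeries P Q k) * (x / (x - 1)) ^ i * (1 - x) ^ (P - k) := fun i => by
    have newton := (rescale_neg_one_binomialSeries_mem_absConvergentAt hx1 (P - k - i)).2
    simp only [coeff_rescale, binomialSeries_coeff, smul_eq_mul, mul_one, mul_right_comm,
      ← mul_pow, neg_one_mul] at newton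
    have split : ∀ l, c (i, l) * (-x) ^ (i + l) = coeff i (gaussSeries P Q k) * (-x) ^ i *
        ((-x) ^ l * Ring.choose (P - k - i) l) := fun l => by rw [pow_add]; ring
    simp only [split, tsum_mul_left, newton]
    rw [Complex.cpow_sub _ _ h1, Complex.cpow_natCast, ← neg_div_neg_eq x, neg_sub, div_pow]
    ring
  have sum_antidiagonals : ∑' p : ℕ × ℕ, c p * (-x) ^ (p.1 + p.2) =
      ∑' n, coeff n (gaussSeries P (-(k + Q + 1)) k) * x ^ n := by
    refine (mk_sum_mem_absConvergentAt (S := Finset.HasAntidiagonal.antidiagonal)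
      (fun n p hp => Finset.HasAntidiagonal.mem_antidiagonal.mp hp)
      (fun p _ => Finset.HasAntidiagonal.mem_antidiagonal.mpr rfl) summable).2.symm.trans
      (tsum_congr fun n => ?_)
    rw [coeff_mk, sum_antidiagonal_gaussSeries, mul_right_comm, ← mul_pow, neg_one_mul, neg_neg,
      mul_comm]
  rw [← sum_antidiagonals, summable.of_norm.tsum_prod, tsum_congr sum_rows, tsum_mul_right,
    mul_comm, mul_assoc, ← Complex.cpow_add _ _ h1]
  simp

end Pfaff

section MatrixCoefficients

open PowerSeries

lemma tsum_toNat_add_eq_tsum_toNat_sub (F : ℕ → ℕ → ℂ) (d : ℤ) :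
    (∑' s : ℕ, if d + s < 0 then 0 else F s (d + s).toNat) =
      ∑' i : ℕ, if -d + i < 0 then 0 else F (-d + i).toNat i := by
  refine tsum_eq_tsum_of_ne_zero_bij (fun i => (-d + (i : ℕ)).toNat) (fun i j h => ?_)
    (fun s hs => ?_) fun i => ?_
  · have hi := i.2
    have hj := j.2
    simp only [Function.mem_support, ne_eq, ite_eq_left_iff, not_forall] at hi hj
    ext
    grind
  · simp only [Function.mem_support, ne_eq, ite_eq_left_iff, not_forall] at hs
    obtain ⟨nonneg, ne⟩ := hs
    have inverse : (-d + ((d + s).toNat : ℤ)).toNat = s := by grind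
    refine ⟨⟨(d + s).toNat, ?_⟩, inverse⟩
    rw [Function.mem_support, if_neg (by grind), inverse]
    exact ne
  · have hi := i.2
    simp only [Function.mem_support, ne_eq, ite_eq_left_iff, not_forall] at hi
    obtain ⟨nonneg, -⟩ := hi
    have inverse : (d + ((-d + (i : ℕ)).toNat : ℤ)).toNat = i := by grind
    rw [if_neg (by grind), if_neg nonneg, inverse]

variable {α β : ℂ} (z z' : ℂ) (a b : ℤ)

lemma mcoef_eq_tsum_gaussSeries (hβ : β ≠ 0) :
    mcoef α β z z' a b =
      β ^ (a - b) * ∑' i, coeff i (gaussSeries (z' + a) (z + b) (a - b)) * (α * β) ^ i := by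
  rw [mcoef, tsum_toNat_add_eq_tsum_toNat_sub fun s i => (β ^ s / (s.factorial : ℂ)) *
    fallFac (z' + ((a : ℂ) + 1/2) - 1/2) s * (α ^ i / (i.factorial : ℂ)) *
    riseFac (z + ((a : ℂ) + 1/2) - s + 1/2) i, neg_sub, ← tsum_mul_left]
  refine tsum_congr fun i => ?_
  rw [gaussSeries, coeff_mk]
  split_ifs with neg
  · simp [intChoose_of_neg _ neg]
  · obtain ⟨s, hs⟩ := Int.eq_ofNat_of_zero_le (not_lt.mp neg)
    have hsc : (a : ℂ) - b + i = s := by exact_mod_cast hs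
    have hpow : β ^ s = β ^ (a - b) * β ^ i := by
      rw [← zpow_natCast β s, ← hs, zpow_add₀ hβ, zpow_natCast]
    rw [hs, Int.toNat_natCast, intChoose_natCast, riseFac_eq_fallFac,
      ringChoose_eq_fallFac_div_factorial, ringChoose_eq_fallFac_div_factorial, hpow, mul_pow,
      show z' + ((a : ℂ) + 1/2) - 1/2 = z' + a by ring,
      show z + ((a : ℂ) + 1/2) - s + 1/2 + i - 1 = z + b by rw [← hsc]; ring]
    ring

lemma mcoefStar_eq_tsum_gaussSeries (hβ : β ≠ 0) :
    mcoefStar α β z z' a b = β ^ (b - a) *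
      ∑' i, coeff i (gaussSeries (-(z' + a + 1)) (-(z + b + 1)) (b - a)) * (α * β) ^ i := by
  rw [mcoefStar, tsum_toNat_add_eq_tsum_toNat_sub fun s i => ((-β) ^ s / (s.factorial : ℂ)) *
    riseFac (z' + ((a : ℂ) + 1/2) + 1/2) s * ((-α) ^ i / (i.factorial : ℂ)) *
    fallFac (z + ((a : ℂ) + 1/2) + s - 1/2) i, neg_sub, ← tsum_mul_left]
  refine tsum_congr fun i => ?_
  rw [gaussSeries, coeff_mk]
  split_ifs with neg
  · simp [intChoose_of_neg _ neg]
  · obtain ⟨s, hs⟩ := Int.eq_ofNat_of_zero_le (not_lt.mp neg)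
    have hsc : (b : ℂ) - a + i = s := by exact_mod_cast hs
    have hpow : β ^ s = β ^ (b - a) * β ^ i := by
      rw [← zpow_natCast β s, ← hs, zpow_add₀ hβ, zpow_natCast]
    have falling : fallFac (z + ((a : ℂ) + 1/2) + s - 1/2) i =
        (-1) ^ i * fallFac (-(z + b + 1)) i := by
      rw [← riseFac_eq_neg_one_pow_mul_fallFac_neg, riseFac_eq_fallFac, ← hsc]
      ring_nf
    have cancel : ∀ n : ℕ, (-1 : ℂ) ^ n * (-1) ^ n = 1 := fun n => by simp [← mul_pow]
    rw [hs, Int.toNat_natCast, intChoose_natCast, falling, riseFac_eq_neg_one_pow_mul_fallFac_neg,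
      ringChoose_eq_fallFac_div_factorial, ringChoose_eq_fallFac_div_factorial, neg_pow β s,
      neg_pow α, hpow, mul_pow, show -(z' + ((a : ℂ) + 1/2) + 1/2) = -(z' + a + 1) by ring]
    linear_combination (β ^ (b - a) * β ^ i * fallFac (-(z' + a + 1)) s * α ^ i *
      fallFac (-(z + b + 1)) i / s.factorial / i.factorial) *
        ((-1 : ℂ) ^ i * (-1) ^ i * cancel s + cancel i)

end MatrixCoefficients

section Kernel

open PowerSeries

variable {α β x : ℂ} (z z' : ℂ) (a b : ℤ)

/-- The power series factor of `⟨a|-1-t⟩` after the Pfaff transformation. -/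
def rowSeries (t : ℕ) : ℂ⟦X⟧ := gaussSeries (z' + a) (-(z + a + 1)) (a + 1 + t)

/-- The power series factor of `⟨b|-1-t⟩*` after the Pfaff transformation. -/
def colSeries (t : ℕ) : ℂ⟦X⟧ := gaussSeries (-(z' + b + 1)) (z + b) (-1 - t - b)

lemma coeff_colSeries_eq_zero {t j : ℕ} (h : j < b + 1 + t) : coeff j (colSeries z z' b t) = 0 := by
  rw [colSeries, gaussSeries, coeff_mk, intChoose_of_neg _ (by grind), zero_mul]

theorem mcoef_mul_mcoefStar (hx : ‖x‖ < 1 / 2) (hβ : β ≠ 0) (hαβ : α * β = x / (x - 1)) (t : ℕ) :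
    mcoef α β z z' a (-1 - t) * mcoefStar α β z z' b (-1 - t) =
      β ^ (a - b) * (1 - x) * ((∑' i, coeff i (rowSeries z z' a t) * x ^ i) *
        ∑' j, coeff j (colSeries z z' b t) * x ^ j) := by
  have h1 : 1 - x ≠ 0 := fun h => by
    rw [← sub_eq_zero.mp h, norm_one] at hx
    norm_num at hx
  have hpow : β ^ (a - b) = β ^ (a - (-1 - t : ℤ)) * β ^ (-1 - t - b) := by
    rw [← zpow_add₀ hβ, sub_add_sub_cancel]
  have cpow_mul_cpow : (1 - x) ^ (((a - (-1 - t) : ℤ) : ℂ) - (z' + a)) *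
      (1 - x) ^ (((-1 - t - b : ℤ) : ℂ) - -(z' + b + 1)) = 1 - x := by
    rw [← Complex.cpow_add _ _ h1]
    push_cast
    ring_nf
    simp
  rw [mcoef_eq_tsum_gaussSeries _ _ _ _ hβ, mcoefStar_eq_tsum_gaussSeries _ _ _ _ hβ, hαβ,
    tsum_gaussSeries_div_sub_one _ _ _ hx, tsum_gaussSeries_div_sub_one _ _ _ hx, hpow]
  have row : gaussSeries (z' + a) (-(((a - (-1 - t) : ℤ) : ℂ) + (z + (-1 - t : ℤ)) + 1))
      (a - (-1 - t)) = rowSeries z z' a t := by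
    rw [rowSeries]
    congr 1
    · push_cast; ring
    · ring
  have col : gaussSeries (-(z' + b + 1)) (-(((-1 - t - b : ℤ) : ℂ) + -(z + (-1 - t : ℤ) + 1) + 1))
      (-1 - t - b) = colSeries z z' b t := by
    rw [colSeries]
    congr 1
    push_cast; ring
  rw [row, col, mul_mul_mul_comm, mul_mul_mul_comm (_ ^ _) _ (_ ^ _), cpow_mul_cpow]
  ring

lemma summable_coeff_rowSeries_mul_coeff_colSeries (hx : ‖x‖ < 1) :
    Summable fun p : ℕ × ℕ × ℕ => ‖coeff p.2.1 (rowSeries z z' a p.1) *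
      coeff p.2.2 (colSeries z z' b p.1) * x ^ (p.2.1 + p.2.2)‖ := by
  obtain ⟨q, ρ, hq, h0, h1, hρ⟩ := exists_one_lt_mul_le_sq (norm_nonneg x) hx
  obtain ⟨C, hC, row_le⟩ :=
    exists_norm_coeff_gaussSeries_mul_pow_le (z' + a) (-(z + a + 1)) hq hρ
  obtain ⟨D, hD, col_le⟩ := exists_norm_coeff_gaussSeries_mul_pow_le (-(z' + b + 1)) (z + b) hq hρ
  have geometric := summable_geometric_of_lt_one h0.le h1
  have majorant : Summable fun p : ℕ × ℕ × ℕ => ρ ^ p.1 * (ρ ^ p.2.1 * ρ ^ p.2.2) :=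
    geometric.mul_of_nonneg (geometric.mul_of_nonneg geometric (fun _ => pow_nonneg h0.le _)
      fun _ => pow_nonneg h0.le _) (fun _ => pow_nonneg h0.le _)
      fun _ => mul_nonneg (pow_nonneg h0.le _) (pow_nonneg h0.le _)
  refine (majorant.mul_left (C * D * q ^ (a - b) * ρ ^ (b + 1))).of_nonneg_of_le
    (fun _ => norm_nonneg _) ?_
  rintro ⟨t, i, j⟩
  dsimp only
  rcases lt_or_ge (j : ℤ) (b + 1 + t) with lt | ge
  · rw [coeff_colSeries_eq_zero _ _ _ lt, mul_zero, zero_mul, norm_zero]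
    positivity
  have zpow_split : q ^ (a - b) = q ^ (a + 1 + t) * q ^ (-1 - t - b) := by
    rw [← zpow_add₀ (by positivity)]
    ring_nf
  have pow_j_le : ρ ^ j ≤ ρ ^ (b + 1) * ρ ^ t := by
    rw [← zpow_natCast, ← zpow_natCast, ← zpow_add₀ h0.ne']
    exact zpow_le_zpow_right_of_le_one₀ h0 h1.le ge
  calc _ = ‖coeff i (rowSeries z z' a t) * x ^ i‖ * ‖coeff j (colSeries z z' b t) * x ^ j‖ := by
        rw [← norm_mul, pow_add, mul_mul_mul_comm]
    _ ≤ (C * q ^ (a + 1 + t) * (ρ * ρ) ^ i) * (D * q ^ (-1 - t - b) * (ρ * ρ) ^ j) :=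
        mul_le_mul (row_le _ _) (col_le _ _) (norm_nonneg _) (by positivity)
    _ = C * D * q ^ (a - b) * (ρ ^ i * ρ ^ i * (ρ ^ j * ρ ^ j)) := by
        rw [zpow_split, mul_pow, mul_pow]; ring
    _ ≤ C * D * q ^ (a - b) * (1 * ρ ^ i * (ρ ^ (b + 1) * ρ ^ t * ρ ^ j)) := by
        gcongr
        exact pow_le_one₀ h0.le h1.le
    _ = _ := by ring

lemma tsum_rowSeries_mul_tsum_colSeries (hx : ‖x‖ < 1) (t : ℕ) :
    (∑' i, coeff i (rowSeries z z' a t) * x ^ i) * ∑' j, coeff j (colSeries z z' b t) * x ^ j =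
      ∑' p : ℕ × ℕ, coeff p.1 (rowSeries z z' a t) * coeff p.2 (colSeries z z' b t) *
        x ^ (p.1 + p.2) := by
  have row := summable_coeff_gaussSeries (z' + a) (-(z + a + 1)) (a + 1 + t) hx
  have col := summable_coeff_gaussSeries (-(z' + b + 1)) (z + b) (-1 - t - b) hx
  exact (tsum_mul_tsum_of_summable_norm row col).trans
    (tsum_congr fun p => by rw [pow_add, mul_mul_mul_comm]; rfl)

theorem summable_norm_mcoef_mul_mcoefStar (hx : ‖x‖ < 1 / 2) (hβ : β ≠ 0)
    (hαβ : α * β = x / (x - 1)) :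
    Summable fun t : ℕ => ‖mcoef α β z z' a (-1 - t) * mcoefStar α β z z' b (-1 - t)‖ := by
  have hx1 : ‖x‖ < 1 := by linarith
  simp only [mcoef_mul_mcoefStar z z' a b hx hβ hαβ, norm_mul (β ^ (a - b) * (1 - x)),
    tsum_rowSeries_mul_tsum_colSeries z z' a b hx1]
  have triple := summable_coeff_rowSeries_mul_coeff_colSeries z z' a b hx1
  exact Summable.mul_left _ <| triple.prod.of_nonneg_of_le (fun _ => norm_nonneg _)
    fun t => norm_tsum_le_tsum_norm (triple.prod_factor t)

/-- The power series expansion of the kernel: `K(a, b) = β ^ (a - b) (1 - ξ) ∑ kₙ ξⁿ`. The range of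
`t` covers all the nonzero terms, as `colSeries z z' b t` has order at least `b + 1 + t`. -/
def kernelSeries : ℂ⟦X⟧ :=
  mk fun n => ∑ p ∈ Finset.range (n + b.natAbs + 1) ×ˢ Finset.HasAntidiagonal.antidiagonal n,
    coeff p.2.1 (rowSeries z z' a p.1) * coeff p.2.2 (colSeries z z' b p.1)

theorem kernelSeries_mem_absConvergentAt (hx : ‖x‖ < 1 / 2) (hβ : β ≠ 0)
    (hαβ : α * β = x / (x - 1)) :
    (kernelSeries z z' a b, kerK α β z z' a b / (β ^ (a - b) * (1 - x))) ∈ absConvergentAt x := by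
  have hx1 : ‖x‖ < 1 := by linarith
  have h1 : 1 - x ≠ 0 := fun h => by simp [← sub_eq_zero.mp h] at hx1
  have triple := summable_coeff_rowSeries_mul_coeff_colSeries z z' a b hx1
  have value : kerK α β z z' a b / (β ^ (a - b) * (1 - x)) = ∑' p : ℕ × ℕ × ℕ,
      coeff p.2.1 (rowSeries z z' a p.1) * coeff p.2.2 (colSeries z z' b p.1) *
        x ^ (p.2.1 + p.2.2) := by
    rw [div_eq_iff (mul_ne_zero (zpow_ne_zero _ hβ) h1), mul_comm, triple.of_norm.tsum_prod,
      ← tsum_mul_left, kerK]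
    exact tsum_congr fun t => by
      rw [mcoef_mul_mcoefStar z z' a b hx hβ hαβ, tsum_rowSeries_mul_tsum_colSeries z z' a b hx1]
  rw [value]
  refine mk_sum_mem_absConvergentAt (fun n p hp => ?_) (fun p hp => ?_) triple
  · exact Finset.HasAntidiagonal.mem_antidiagonal.mp (Finset.mem_product.mp hp).2
  · have ge := not_lt.mp (mt (coeff_colSeries_eq_zero z z' b) (right_ne_zero_of_mul hp))
    simp only [Finset.mem_product, Finset.mem_range, Finset.HasAntidiagonal.mem_antidiagonal,
      and_true]
    grind

lemma gaussSeries_mem_polynomialSeries {P Q : ℂ × ℂ → ℂ} (hP : P ∈ parameterPolynomials)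
    (hQ : Q ∈ parameterPolynomials) (k : ℤ) :
    (fun p => gaussSeries (P p) (Q p) k) ∈ polynomialSeries := fun n => by
  simp only [gaussSeries, coeff_mk]
  suffices int_choose : (fun p => intChoose (P p) (k + n)) ∈ parameterPolynomials from
    mul_mem int_choose (ringChoose_mem_parameterPolynomials hQ n)
  rcases lt_or_ge (k + n) 0 with neg | nonneg
  · simp only [intChoose_of_neg _ neg]
    exact zero_mem parameterPolynomials
  · obtain ⟨m, hm⟩ := Int.eq_ofNat_of_zero_le nonneg
    simpa only [hm, intChoose_natCast] using ringChoose_mem_parameterPolynomials hP m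

lemma kernelSeries_mem_polynomialSeries :
    (fun p : ℂ × ℂ => kernelSeries p.1 p.2 a b) ∈ polynomialSeries := fun n => by
  have const : ∀ c : ℂ, (fun _ => c) ∈ parameterPolynomials := algebraMap_mem parameterPolynomials
  have fst := fst_mem_parameterPolynomials
  have snd := snd_mem_parameterPolynomials
  have row : ∀ t, (fun p : ℂ × ℂ => rowSeries p.1 p.2 a t) ∈ polynomialSeries := fun t =>
    gaussSeries_mem_polynomialSeries (add_mem snd (const a))
      (neg_mem (add_mem (add_mem fst (const a)) (const 1))) _
  have col : ∀ t, (fun p : ℂ × ℂ => colSeries p.1 p.2 b t) ∈ polynomialSeries := fun t =>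
    gaussSeries_mem_polynomialSeries (neg_mem (add_mem (add_mem snd (const b)) (const 1)))
      (add_mem fst (const b)) _
  have expand : (fun p : ℂ × ℂ => coeff n (kernelSeries p.1 p.2 a b)) =
      ∑ q ∈ Finset.range (n + b.natAbs + 1) ×ˢ Finset.HasAntidiagonal.antidiagonal n,
        (fun p : ℂ × ℂ => coeff q.2.1 (rowSeries p.1 p.2 a q.1)) *
          fun p => coeff q.2.2 (colSeries p.1 p.2 b q.1) := by
    ext p
    simp [kernelSeries]
  exact expand ▸ sum_mem fun q _ => mul_mem (row _ _) (col _ _)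

lemma det_zpow_sub_mul {s : ℕ} {β c : ℂ} (hβ : β ≠ 0) (x : Fin s → ℤ)
    (k : Matrix (Fin s) (Fin s) ℂ) :
    (Matrix.of fun p q => β ^ (x p - x q) * c * k p q).det = c ^ s * k.det := by
  let D := Matrix.diagonal fun p => β ^ x p
  let E := Matrix.diagonal fun p => β ^ (-x p)
  have factor : (Matrix.of fun p q => β ^ (x p - x q) * c * k p q) = D * (c • k) * E := by
    ext p q
    simp only [D, E, Matrix.of_apply, Matrix.mul_diagonal, Matrix.diagonal_mul, Matrix.smul_apply,
      smul_eq_mul, sub_eq_add_neg, zpow_add₀ hβ]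
    ring
  have cancel : D.det * E.det = 1 := by
    rw [Matrix.det_diagonal, Matrix.det_diagonal, ← Finset.prod_mul_distrib]
    exact Finset.prod_eq_one fun p _ => by rw [← zpow_add₀ hβ, add_neg_cancel, zpow_zero]
  rw [factor, Matrix.det_mul, Matrix.det_mul, Matrix.det_smul, Fintype.card_fin, mul_right_comm,
    cancel, one_mul]

end Kernel

section SymmetricPower

open Polynomial

variable {R : Type*} [CommRing R] (n : ℕ)

/-- The action of a `2 × 2` matrix on homogeneous polynomials of degree `n - 1` in two variables,
in the basis of monomials; the homogeneous polynomials are encoded by dehomogenization. -/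
def symPow (A : Matrix (Fin 2) (Fin 2) R) : Matrix (Fin n) (Fin n) R :=
  Matrix.of fun i j =>
    ((C (A 0 1) + C (A 1 1) * X) ^ (j : ℕ) * (C (A 0 0) + C (A 1 0) * X) ^ (n - 1 - j)).coeff i

lemma natDegree_C_add_C_mul_X_pow_le (a b : R) (m : ℕ) :
    ((C a + C b * X) ^ m).natDegree ≤ m := by
  compute_degree

lemma homogenize_C_add_C_mul_X_pow (a b : R) (m : ℕ) :
    ((C a + C b * X) ^ m).homogenize m =
      (MvPolynomial.C a * MvPolynomial.X 1 + MvPolynomial.C b * MvPolynomial.X 0) ^ m := by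
  induction m with
  | zero => simp
  | succ m ih =>
    rw [pow_succ, homogenize_mul _ _ (natDegree_C_add_C_mul_X_pow_le a b m)
      (by simpa using natDegree_C_add_C_mul_X_pow_le a b 1), ih]
    simp [pow_succ]

lemma aeval_homogenize_eq_sum (p : R[X]) (L₀ L₁ : R[X]) :
    MvPolynomial.aeval ![L₁, L₀] (p.homogenize (n - 1)) =
      ∑ k ∈ Finset.range (n - 1 + 1), C (p.coeff k) * (L₁ ^ k * L₀ ^ (n - 1 - k)) := by
  simp only [homogenize, map_sum, Finset.Nat.sum_antidiagonal_eq_sum_range_succ_mk,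
    MvPolynomial.aeval_monomial]
  refine Finset.sum_congr rfl fun k _ => ?_
  rw [Finsupp.prod_fintype _ _ (by simp)]
  simp [Fin.prod_univ_two]

theorem symPow_mul (A B : Matrix (Fin 2) (Fin 2) R) :
    symPow n (A * B) = symPow n A * symPow n B := by
  ext i j
  have hn : n - 1 + 1 = n := by have := i.2; omega
  have split : (j : ℕ) + (n - 1 - j) = n - 1 := by omega
  let L₀ : R[X] := C (A 0 0) + C (A 1 0) * X
  let L₁ : R[X] := C (A 0 1) + C (A 1 1) * X
  have homog : ((C (B 0 1) + C (B 1 1) * X) ^ (j : ℕ) *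
      (C (B 0 0) + C (B 1 0) * X) ^ (n - 1 - j)).homogenize (n - 1) = _ :=
    (congrArg _ split.symm).trans (homogenize_mul _ _ (natDegree_C_add_C_mul_X_pow_le _ _ _)
      (natDegree_C_add_C_mul_X_pow_le _ _ _))
  have subst := aeval_homogenize_eq_sum n ((C (B 0 1) + C (B 1 1) * X) ^ (j : ℕ) *
    (C (B 0 0) + C (B 1 0) * X) ^ (n - 1 - j)) L₀ L₁
  rw [homog, homogenize_C_add_C_mul_X_pow, homogenize_C_add_C_mul_X_pow, hn,
    ← Fin.sum_univ_eq_sum_range (fun k => C (coeff _ k) * (L₁ ^ k * L₀ ^ (n - 1 - k)))] at subst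
  have linear : ∀ k, C ((A * B) 0 k) + C ((A * B) 1 k) * X = C (B 0 k) * L₀ + C (B 1 k) * L₁ := by
    intro k
    simp only [Matrix.mul_apply, Fin.sum_univ_two, C_add, C_mul, L₀, L₁]
    ring
  rw [symPow, Matrix.of_apply, linear, linear, Matrix.mul_apply]
  simp only [map_mul, map_pow, map_add, MvPolynomial.aeval_X, MvPolynomial.aeval_C] at subst
  refine (congrArg (fun p => p.coeff i) subst).trans ?_
  rw [finsetSum_coeff]
  exact Finset.sum_congr rfl fun k _ => by
    rw [coeff_C_mul, mul_comm]
    rfl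

theorem symPow_one : symPow n (1 : Matrix (Fin 2) (Fin 2) R) = 1 := by
  ext i j
  simp [symPow, coeff_X_pow, Matrix.one_apply, Fin.ext_iff]

lemma symPow_apply_eq_zero_of_lt {A : Matrix (Fin 2) (Fin 2) R} (hA : A 0 1 = 0) {i j : Fin n}
    (hij : i < j) : symPow n A i j = 0 := by
  rw [symPow, Matrix.of_apply, hA, C_0, zero_add, mul_pow, ← C_pow, mul_assoc, coeff_C_mul,
    coeff_X_pow_mul', if_neg (by simpa using hij), mul_zero]

lemma symPow_apply_eq_zero_of_gt {A : Matrix (Fin 2) (Fin 2) R} (hA : A 1 0 = 0) {i j : Fin n}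
    (hij : j < i) : symPow n A i j = 0 := by
  rw [symPow, Matrix.of_apply, hA, C_0, zero_mul, add_zero, ← C_pow, coeff_mul_C,
    coeff_eq_zero_of_natDegree_lt
      ((natDegree_C_add_C_mul_X_pow_le _ _ _).trans_lt (by simpa using hij)), zero_mul]

lemma symPow_apply_self_of_lower {A : Matrix (Fin 2) (Fin 2) R} (hA : A 0 1 = 0) (i : Fin n) :
    symPow n A i i = A 1 1 ^ (i : ℕ) * A 0 0 ^ (n - 1 - i) := by
  rw [symPow, Matrix.of_apply, hA, C_0, zero_add, mul_pow, ← C_pow, mul_assoc, coeff_C_mul,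
    coeff_X_pow_mul', if_pos le_rfl, Nat.sub_self, coeff_zero_eq_eval_zero]
  simp

lemma symPow_apply_self_of_upper {A : Matrix (Fin 2) (Fin 2) R} (hA : A 1 0 = 0) (i : Fin n) :
    symPow n A i i = A 1 1 ^ (i : ℕ) * A 0 0 ^ (n - 1 - i) := by
  have top : ((C (A 0 1) + C (A 1 1) * X) ^ (i : ℕ)).coeff i = A 1 1 ^ (i : ℕ) := by
    have natDegree_le : (C (A 0 1) + C (A 1 1) * X).natDegree ≤ 1 := by compute_degree
    simpa using coeff_pow_of_natDegree_le (m := i) natDegree_le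
  rw [symPow, Matrix.of_apply, hA, C_0, zero_mul, add_zero, ← C_pow, coeff_mul_C, top]

end SymmetricPower

section FiniteLevel

open Polynomial in
lemma coeff_C_add_C_mul_X_pow {R : Type*} [CommRing R] (a b : R) (m i : ℕ) :
    ((C a + C b * X) ^ m).coeff i = a ^ (m - i) * b ^ i * m.choose i := by
  have comp : (C a + C b * X) ^ m = ((X + C a) ^ m).comp (C b * X) := by
    simp [add_comm]
  rw [comp, comp_C_mul_X_coeff, coeff_X_add_C_pow]
  ring

open Polynomial in
lemma pow_mul_one_sub_X_pow_eq_sum {R : Type*} [CommRing R] (w : R) (q n : ℕ) :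
    (C w + C (1 - w) * X) ^ q * (C 1 + C (-1) * X) ^ n =
      ∑ i ∈ Finset.range (q + 1), C (w ^ i * q.choose i) *
        (X ^ (q - i) * (C 1 + C (-1) * X) ^ (n + i)) := by
  rw [show (C w + C (1 - w) * X : R[X]) = C w * (C 1 + C (-1) * X) + X by
    simp only [map_sub, map_neg, map_one]; ring, add_pow, Finset.sum_mul]
  refine Finset.sum_congr rfl fun i _ => ?_
  generalize (C 1 + C (-1) * X : R[X]) = V
  simp only [map_mul, map_pow, map_natCast]
  ring

open Polynomial in
lemma X_sub_pow_mul_pow_eq_sum {R : Type*} [CommRing R] (w : R) (p n : ℕ) :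
    (C (-w) + C 1 * X) ^ p * (C (1 - w) + C 1 * X) ^ n =
      ∑ i ∈ Finset.range (n + 1), C (n.choose i : R) * (C (-w) + C 1 * X) ^ (p + i) := by
  rw [show (C (1 - w) + C 1 * X : R[X]) = (C (-w) + C 1 * X) + 1 by
    simp only [map_sub, map_neg, map_one]; ring, add_pow _ (1 : R[X]), Finset.mul_sum]
  refine Finset.sum_congr rfl fun i _ => ?_
  rw [one_pow, pow_add, map_natCast]
  ring

variable {N M : ℕ} (w : ℂ)

open Polynomial in
theorem mcoef_eq_symPow (p q : Fin (N + M)) :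
    mcoef w 1 N (-M) ((p : ℕ) - N) ((q : ℕ) - N) = symPow (N + M) !![1, w; -1, 1 - w] p q := by
  have hp := p.2
  have hq := q.2
  have upper : (N : ℂ) + ((((q : ℕ) : ℤ) - N : ℤ) : ℂ) = (q : ℕ) := by push_cast; ring
  have lower : -(M : ℂ) + ((((p : ℕ) : ℤ) - N : ℤ) : ℂ) = -((N + M - 1 - p : ℕ) + 1) := by
    rw [Nat.sub_sub, Nat.cast_sub (by omega)]
    push_cast
    ring
  rw [mcoef_eq_tsum_gaussSeries _ _ _ _ one_ne_zero, one_zpow, one_mul, mul_one, upper, lower]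
  simp only [gaussSeries, PowerSeries.coeff_mk, Ring.choose_natCast]
  rw [tsum_eq_sum (s := Finset.range (q + 1)) fun i hi => by
    rw [Nat.choose_eq_zero_of_lt (by simpa using hi)]; simp]
  simp only [symPow, Matrix.of_apply, Matrix.cons_val', Matrix.cons_val_zero, Matrix.cons_val_one,
    Matrix.cons_val_fin_one, pow_mul_one_sub_X_pow_eq_sum, finsetSum_coeff, coeff_C_mul]
  refine Finset.sum_congr rfl fun i hi => ?_
  have hi' : i ≤ q := by simpa [Nat.lt_succ_iff] using hi
  rw [coeff_X_pow_mul']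
  split_ifs with h
  · obtain ⟨m, hm⟩ := Nat.exists_eq_add_of_le h
    rw [show ((p : ℕ) : ℤ) - N - ((q : ℕ) - N) + i = m by omega, intChoose_natCast,
      coeff_C_add_C_mul_X_pow, show (p : ℕ) - (q - i) = m by omega,
      show N + M - 1 - q + i = N + M - 1 - p + m by omega, one_pow, one_mul]
    have := ringChoose_add_natCast ((N + M - 1 - p : ℕ) : ℂ) m
    rw [← Nat.cast_add, Ring.choose_natCast] at this
    rw [this, ← mul_assoc ((-1 : ℂ) ^ m), ← mul_pow]
    ring
  · rw [intChoose_of_neg _ (by omega), zero_mul, zero_mul, mul_zero]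

open Polynomial in
theorem mcoefStar_eq_symPow (p q : Fin (N + M)) :
    mcoefStar w 1 N (-M) ((p : ℕ) - N) ((q : ℕ) - N) =
      symPow (N + M) !![1 - w, -w; 1, 1] q p := by
  have hp := p.2
  have lower : -((N : ℂ) + ((((q : ℕ) : ℤ) - N : ℤ) : ℂ) + 1) = -((q : ℕ) + 1) := by
    push_cast; ring
  have upper : -(-(M : ℂ) + ((((p : ℕ) : ℤ) - N : ℤ) : ℂ) + 1) = (N + M - 1 - p : ℕ) := by
    rw [Nat.sub_sub, Nat.cast_sub (by omega)]
    push_cast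
    ring
  rw [mcoefStar_eq_tsum_gaussSeries _ _ _ _ one_ne_zero, one_zpow, one_mul, mul_one, upper, lower]
  simp only [gaussSeries, PowerSeries.coeff_mk, intChoose, ite_mul, zero_mul, mul_assoc,
    sub_sub_sub_cancel_right]
  rw [tsum_toNat_add_eq_tsum_toNat_sub fun i j => Ring.choose ((N + M - 1 - p : ℕ) : ℂ) j *
    (Ring.choose (-((q : ℕ) + 1) : ℂ) i * w ^ i), neg_sub,
    tsum_eq_sum (s := Finset.range (N + M - 1 - p + 1)) fun i hi => by
      rw [Ring.choose_natCast, Nat.choose_eq_zero_of_lt (by simpa using hi)]; simp]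
  simp only [symPow, Matrix.of_apply, Matrix.cons_val', Matrix.cons_val_zero, Matrix.cons_val_one,
    Matrix.cons_val_fin_one, X_sub_pow_mul_pow_eq_sum, finsetSum_coeff, coeff_C_mul]
  refine Finset.sum_congr rfl fun i _ => ?_
  rw [coeff_C_add_C_mul_X_pow, Ring.choose_natCast]
  split_ifs with neg
  · rw [Nat.choose_eq_zero_of_lt (show (p : ℕ) + i < q by omega), Nat.cast_zero, mul_zero, mul_zero]
  · obtain ⟨m, hm⟩ := Int.eq_ofNat_of_zero_le (not_lt.mp neg)
    have := ringChoose_add_natCast (q : ℕ) m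
    rw [← Nat.cast_add, Ring.choose_natCast] at this
    rw [hm, Int.toNat_natCast, show (p : ℕ) + i = q + m by omega, Nat.add_sub_cancel_left,
      Nat.choose_symm_add, this, neg_pow w]
    linear_combination (- (N + M - 1 - p).choose i * w ^ m * Ring.choose (-((q : ℕ) + 1) : ℂ) m) *
      (Even.neg_one_pow (even_two_mul m) : (-1 : ℂ) ^ (2 * m) = 1)

lemma mcoefStar_eq_zero_of_ge (p : Fin (N + M)) {t : ℕ} (ht : N ≤ t) :
    mcoefStar w 1 N (-M) ((p : ℕ) - N) (-1 - t) = 0 := by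
  obtain ⟨u, rfl⟩ := Nat.exists_eq_add_of_le ht
  have upper : -((N : ℂ) + ((-1 - (N + u : ℕ) : ℤ) : ℂ) + 1) = u := by push_cast; ring
  rw [mcoefStar_eq_tsum_gaussSeries _ _ _ _ one_ne_zero, upper]
  refine mul_eq_zero_of_right _ ((tsum_congr fun i => ?_).trans tsum_zero)
  rw [gaussSeries, PowerSeries.coeff_mk]
  rcases le_or_gt i u with le | gt
  · rw [intChoose_of_neg _ (by omega), zero_mul, zero_mul]
  · rw [Ring.choose_natCast, Nat.choose_eq_zero_of_lt gt, Nat.cast_zero, mul_zero, zero_mul]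

variable (N M)

/-- The matrix coefficients `⟨i|m⟩` at the parameters `(N, -M)` and `αβ = w`, for `i` in the window
of positions `-N, …, M - 1` and for the negative `m` in it; indices are shifted by `N`. -/
def rowMatrix : Matrix (Fin (N + M)) (Fin N) ℂ :=
  (symPow (N + M) !![1, w; -1, 1 - w]).submatrix id (Fin.castAdd M)

/-- The matrix coefficients `⟨j|m⟩*`, with the conventions of `rowMatrix`. -/
def colMatrix : Matrix (Fin N) (Fin (N + M)) ℂ :=
  (symPow (N + M) !![1 - w, -w; 1, 1]).submatrix (Fin.castAdd M) id

theorem colMatrix_mul_rowMatrix : colMatrix N M w * rowMatrix N M w = 1 := by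
  have inverse : !![1 - w, -w; 1, 1] * !![1, w; -1, 1 - w] = 1 := by
    rw [Matrix.mul_fin_two, Matrix.one_fin_two]
    ring_nf
  rw [colMatrix, rowMatrix, ← Matrix.submatrix_mul _ _ _ _ _ Function.bijective_id, ← symPow_mul,
    inverse, symPow_one, Matrix.submatrix_one _ (Fin.castAdd_injective N M)]

variable {N M} in
theorem kerK_eq_rowMatrix_mul_colMatrix (p p' : Fin (N + M)) :
    kerK w 1 N (-M) ((p : ℕ) - N) ((p' : ℕ) - N) = (rowMatrix N M w * colMatrix N M w) p p' := by
  rw [kerK, tsum_eq_sum (s := Finset.range N) fun t ht => by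
    rw [mcoefStar_eq_zero_of_ge w p' (by simpa using ht), mul_zero], ← Finset.sum_range_reflect,
    ← Fin.sum_univ_eq_sum_range (fun t => mcoef w 1 N (-M) ((p : ℕ) - N) (-1 - (N - 1 - t : ℕ)) *
      mcoefStar w 1 N (-M) ((p' : ℕ) - N) (-1 - (N - 1 - t : ℕ))), Matrix.mul_apply]
  refine Finset.sum_congr rfl fun q _ => ?_
  rw [show (-1 - (N - 1 - q : ℕ) : ℤ) = ((Fin.castAdd M q : Fin (N + M)) : ℕ) - N by
    rw [Fin.val_castAdd]; omega, mcoef_eq_symPow, mcoefStar_eq_symPow]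
  rfl

end FiniteLevel

section Minors

variable {R : Type*} [CommRing R] {N M : ℕ}

lemma mul_submatrix_castAdd_of_upper {ι : Type*} (A B : Matrix (Fin (N + M)) (Fin (N + M)) R)
    (hB : ∀ i j, j < i → B i j = 0) (f : ι → Fin (N + M)) :
    (A * B).submatrix f (Fin.castAdd M) =
      A.submatrix f (Fin.castAdd M) * B.submatrix (Fin.castAdd M) (Fin.castAdd M) := by
  ext i j
  simp only [Matrix.submatrix_apply, Matrix.mul_apply, Fin.sum_univ_add, add_eq_left]
  exact Finset.sum_eq_zero fun k _ => by rw [hB _ _ (Fin.lt_def.mpr (by simp; omega)), mul_zero]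

lemma mul_submatrix_castAdd_of_lower {ι : Type*} (A B : Matrix (Fin (N + M)) (Fin (N + M)) R)
    (hA : ∀ i j, i < j → A i j = 0) (f : ι → Fin (N + M)) :
    (A * B).submatrix (Fin.castAdd M) f =
      A.submatrix (Fin.castAdd M) (Fin.castAdd M) * B.submatrix (Fin.castAdd M) f := by
  ext i j
  simp only [Matrix.submatrix_apply, Matrix.mul_apply, Fin.sum_univ_add, add_eq_left]
  exact Finset.sum_eq_zero fun k _ => by rw [hA _ _ (Fin.lt_def.mpr (by simp; omega)), zero_mul]

lemma det_symPow_submatrix_castAdd_of_lower {A : Matrix (Fin 2) (Fin 2) R} (hA : A 0 1 = 0) :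
    ((symPow (N + M) A).submatrix (Fin.castAdd M) (Fin.castAdd M)).det =
      ∏ i : Fin N, A 1 1 ^ (i : ℕ) * A 0 0 ^ (N + M - 1 - i) := by
  have lower : ((symPow (N + M) A).submatrix (Fin.castAdd M) (Fin.castAdd M)).IsLowerTriangular :=
    fun _ _ hij => symPow_apply_eq_zero_of_lt _ hA hij
  rw [Matrix.det_of_isLowerTriangular _ lower]
  exact Finset.prod_congr rfl fun i _ => symPow_apply_self_of_lower _ hA _

lemma det_symPow_submatrix_castAdd_of_upper {A : Matrix (Fin 2) (Fin 2) R} (hA : A 1 0 = 0) :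
    ((symPow (N + M) A).submatrix (Fin.castAdd M) (Fin.castAdd M)).det =
      ∏ i : Fin N, A 1 1 ^ (i : ℕ) * A 0 0 ^ (N + M - 1 - i) := by
  have upper : ((symPow (N + M) A).submatrix (Fin.castAdd M) (Fin.castAdd M)).IsUpperTriangular :=
    fun _ _ hij => symPow_apply_eq_zero_of_gt _ hA hij
  rw [Matrix.det_of_isUpperTriangular upper]
  exact Finset.prod_congr rfl fun i _ => symPow_apply_self_of_upper _ hA _

lemma det_mul_mul_descFactorial [IsDomain R] (u v : Fin N → R) (f : Fin N → ℕ) :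
    (Matrix.of fun i k => u i * (v k * (f i).descFactorial k)).det =
      (∏ i, u i) * ((∏ k, v k) * (Matrix.vandermonde fun i => (f i : R)).det) := by
  refine (Matrix.det_mul_column u (Matrix.of fun i k => v k * ((f i).descFactorial k : R))).trans
    (congrArg _ ((Matrix.det_mul_row v (Matrix.of fun i k => ((f i).descFactorial k : R))).trans
      (congrArg _ ?_)))
  rw [Matrix.det_eval_matrixOfPolynomials_eq_det_vandermonde (fun i => (f i : R))
      (fun k : Fin N => descPochhammer R k) (fun k => descPochhammer_natDegree R k)
      fun k => monic_descPochhammer R k]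
  simp only [descPochhammer_eval_eq_descFactorial]

end Minors

section Weights

variable {N M : ℕ} {ξ : ℂ}

lemma symPow_lower_apply_castAdd (p : Fin (N + M)) (k : Fin N) :
    symPow (N + M) !![(1 : ℂ), 0; -1, 1] p (Fin.castAdd M k) =
      (-1) ^ (p : ℕ) * (N + M - 1).choose p *
        ((-1) ^ (k : ℕ) / (N + M - 1).descFactorial k * (p : ℕ).descFactorial k) := by
  have hk := k.2
  simp only [symPow, Matrix.of_apply, Matrix.cons_val', Matrix.cons_val_zero, Matrix.cons_val_one,
    Matrix.cons_val_fin_one, Fin.val_castAdd, Polynomial.C_0, zero_add, Polynomial.C_1 (R := ℂ),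
    one_mul]
  rw [Polynomial.coeff_X_pow_mul']
  split_ifs with le
  · obtain ⟨m, hm⟩ := Nat.exists_eq_add_of_le le
    have choose_mul : ((N + M - 1).choose (k + m) * ((k : ℕ) + m).choose k : ℂ) =
        (N + M - 1).choose k * (N + M - 1 - k).choose m := by
      have := Nat.choose_mul (n := N + M - 1) (Nat.le_add_right (k : ℕ) m)
      rw [Nat.add_sub_cancel_left] at this
      exact_mod_cast this
    have choose_ne : ((N + M - 1).choose k : ℂ) ≠ 0 := by
      exact_mod_cast (Nat.choose_pos (by omega)).ne'
    have factorial_ne : ((k : ℕ).factorial : ℂ) ≠ 0 := by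
      exact_mod_cast (k : ℕ).factorial_ne_zero
    have sign : ((-1 : ℂ) ^ (k : ℕ)) * (-1) ^ (k : ℕ) = 1 := by
      rw [← mul_pow, neg_one_mul, neg_neg, one_pow]
    rw [← Polynomial.C_1, coeff_C_add_C_mul_X_pow, one_pow, one_mul, hm,
      Nat.add_sub_cancel_left, Nat.descFactorial_eq_factorial_mul_choose,
      Nat.descFactorial_eq_factorial_mul_choose]
    push_cast
    field_simp
    rw [pow_add]
    linear_combination (-(-1) ^ m * ((N + M - 1).choose k * (N + M - 1 - k).choose m)) * sign -
      ((-1) ^ (k : ℕ) * (-1) ^ m * (-1) ^ (k : ℕ)) * choose_mul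
  · rw [Nat.descFactorial_eq_zero_iff_lt.mpr (not_le.mp le), Nat.cast_zero, mul_zero, mul_zero]

lemma symPow_upper_castAdd_apply (hξ : ξ ≠ 0) (p : Fin (N + M)) (k : Fin N) :
    symPow (N + M) !![1, ξ; 0, 1] (Fin.castAdd M k) p =
      ξ ^ (p : ℕ) * (((ξ ^ (k : ℕ))⁻¹ / (k : ℕ).factorial) * (p : ℕ).descFactorial k) := by
  simp only [symPow, Matrix.of_apply, Matrix.cons_val', Matrix.cons_val_zero, Matrix.cons_val_one,
    Matrix.cons_val_fin_one, Fin.val_castAdd, Polynomial.C_0, zero_mul, add_zero,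
    Polynomial.C_1 (R := ℂ), one_pow, mul_one]
  rw [← Polynomial.C_1, coeff_C_add_C_mul_X_pow, one_pow, mul_one]
  rcases le_or_gt (k : ℕ) p with le | gt
  · have factorial_ne : ((k : ℕ).factorial : ℂ) ≠ 0 := by
      exact_mod_cast (k : ℕ).factorial_ne_zero
    rw [Nat.descFactorial_eq_factorial_mul_choose, pow_sub₀ _ hξ le, Nat.cast_mul]
    field_simp
  · rw [Nat.choose_eq_zero_of_lt gt, Nat.descFactorial_eq_zero_iff_lt.mpr gt, Nat.cast_zero,
      mul_zero, mul_zero, mul_zero]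

/-- The weight, up to normalization, of `N` particles placed at the positions `f i` of the window
`{0, …, N + M - 1}`. -/
def particleWeight (N M : ℕ) (ξ : ℂ) (f : Fin N → ℕ) : ℂ :=
  (∏ i, (N + M - 1).choose (f i) * (-ξ) ^ f i) * (Matrix.vandermonde fun i => (f i : ℂ)).det ^ 2

lemma rowMatrix_submatrix_eq_mul (w : ℂ) (f : Fin N → Fin (N + M)) :
    (rowMatrix N M w).submatrix f id =
      (symPow (N + M) !![1, 0; -1, 1]).submatrix f (Fin.castAdd M) *
        (symPow (N + M) !![1, w; 0, 1]).submatrix (Fin.castAdd M) (Fin.castAdd M) := by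
  have factor : !![1, w; -1, 1 - w] = !![1, 0; -1, 1] * !![1, w; 0, 1] := by
    rw [Matrix.mul_fin_two]
    ring_nf
  rw [← mul_submatrix_castAdd_of_upper _ _ fun _ _ => symPow_apply_eq_zero_of_gt _ rfl,
    ← symPow_mul, ← factor]
  rfl

lemma colMatrix_submatrix_eq_mul (h1 : ξ ≠ 1) (f : Fin N → Fin (N + M)) :
    (colMatrix N M (ξ / (ξ - 1))).submatrix id f =
      (symPow (N + M) !![(1 - ξ)⁻¹, 0; 1, 1 - ξ]).submatrix (Fin.castAdd M) (Fin.castAdd M) *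
        (symPow (N + M) !![1, ξ; 0, 1]).submatrix (Fin.castAdd M) f := by
  have sub_ne : ξ - 1 ≠ 0 := sub_ne_zero.mpr h1
  have sub_ne' : 1 - ξ ≠ 0 := sub_ne_zero.mpr h1.symm
  have factor : !![1 - ξ / (ξ - 1), -(ξ / (ξ - 1)); 1, 1] =
      !![(1 - ξ)⁻¹, 0; 1, 1 - ξ] * !![1, ξ; 0, 1] := by
    rw [Matrix.mul_fin_two]
    congr! 3 <;> grind
  rw [← mul_submatrix_castAdd_of_lower _ _ fun _ _ => symPow_apply_eq_zero_of_lt _ rfl,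
    ← symPow_mul, ← factor]
  rfl

lemma det_rowMatrix_submatrix (w : ℂ) (f : Fin N → Fin (N + M)) :
    ((rowMatrix N M w).submatrix f id).det =
      ((symPow (N + M) !![1, 0; -1, 1]).submatrix f (Fin.castAdd M)).det := by
  rw [rowMatrix_submatrix_eq_mul, Matrix.det_mul, det_symPow_submatrix_castAdd_of_upper rfl]
  simp

lemma det_colMatrix_submatrix (h1 : ξ ≠ 1) (f : Fin N → Fin (N + M)) :
    ((colMatrix N M (ξ / (ξ - 1))).submatrix id f).det =
      ((1 - ξ)⁻¹) ^ (N * M) *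
        ((symPow (N + M) !![1, ξ; 0, 1]).submatrix (Fin.castAdd M) f).det := by
  have sub_ne : 1 - ξ ≠ 0 := sub_ne_zero.mpr h1.symm
  have reflect : ∏ i : Fin N, (1 - ξ)⁻¹ ^ (i.rev : ℕ) = ∏ i : Fin N, (1 - ξ)⁻¹ ^ (i : ℕ) :=
    Equiv.prod_comp Fin.revPerm fun i : Fin N => (1 - ξ)⁻¹ ^ (i : ℕ)
  have shift : ∀ i : Fin N,
      (1 - ξ)⁻¹ ^ (N + M - 1 - i) = (1 - ξ)⁻¹ ^ M * (1 - ξ)⁻¹ ^ (i.rev : ℕ) := by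
    intro i
    rw [← pow_add, Fin.val_rev]
    congr 1
    omega
  rw [colMatrix_submatrix_eq_mul h1, Matrix.det_mul, det_symPow_submatrix_castAdd_of_lower rfl]
  congr 1
  simp only [Matrix.of_apply, Matrix.cons_val', Matrix.cons_val_zero, Matrix.cons_val_one,
    Matrix.cons_val_fin_one, shift, Finset.prod_mul_distrib]
  rw [reflect, mul_left_comm, ← Finset.prod_mul_distrib]
  simp [sub_ne, pow_mul, mul_comm N M]

theorem exists_det_colMatrix_mul_det_rowMatrix_eq (N M : ℕ) (h0 : ξ ≠ 0) (h1 : ξ ≠ 1) :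
    ∃ c : ℂ, ∀ f : Fin N → Fin (N + M),
      ((colMatrix N M (ξ / (ξ - 1))).submatrix id f).det *
        ((rowMatrix N M (ξ / (ξ - 1))).submatrix f id).det =
      c * particleWeight N M ξ fun i => f i := by
  refine ⟨((1 - ξ)⁻¹) ^ (N * M) * (∏ k : Fin N, (ξ ^ (k : ℕ))⁻¹ / (k : ℕ).factorial) *
    ∏ k : Fin N, (-1) ^ (k : ℕ) / ((N + M - 1).descFactorial k : ℂ), fun f => ?_⟩
  have row := det_mul_mul_descFactorial (fun i => (-1) ^ (f i : ℕ) * ((N + M - 1).choose (f i) : ℂ))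
    (fun k => (-1) ^ (k : ℕ) / ((N + M - 1).descFactorial k : ℂ)) fun i => f i
  have col := det_mul_mul_descFactorial (fun i => ξ ^ (f i : ℕ))
    (fun k => (ξ ^ (k : ℕ))⁻¹ / (k : ℕ).factorial) fun i => f i
  simp only [← symPow_lower_apply_castAdd, ← symPow_upper_castAdd_apply h0] at row col
  rw [← Matrix.det_transpose] at col
  have weight : particleWeight N M ξ (fun i => f i) =
      (∏ i, ξ ^ (f i : ℕ)) * (∏ i, (-1) ^ (f i : ℕ) * ((N + M - 1).choose (f i) : ℂ)) *
        (Matrix.vandermonde fun i => ((f i : ℕ) : ℂ)).det ^ 2 := by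
    rw [particleWeight, ← Finset.prod_mul_distrib]
    congr 1
    exact Finset.prod_congr rfl fun i _ => by rw [neg_pow ξ]; ring
  rw [det_colMatrix_submatrix h1, det_rowMatrix_submatrix, weight]
  refine (congrArg₂ (fun u v => _ * u * v) col row).trans ?_
  ring

theorem det_colMatrix_mul_det_rowMatrix_vacuum (N M : ℕ) (h1 : ξ ≠ 1) :
    ((colMatrix N M (ξ / (ξ - 1))).submatrix id (Fin.castAdd M ∘ Fin.rev)).det *
        ((rowMatrix N M (ξ / (ξ - 1))).submatrix (Fin.castAdd M ∘ Fin.rev) id).det =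
      ((1 - ξ)⁻¹) ^ (N * M) := by
  have unitriangular :
      ((symPow (N + M) !![1, ξ; 0, 1]).submatrix (Fin.castAdd M) (Fin.castAdd M)).det *
        ((symPow (N + M) !![(1 : ℂ), 0; -1, 1]).submatrix (Fin.castAdd M) (Fin.castAdd M)).det =
      1 := by
    rw [det_symPow_submatrix_castAdd_of_upper rfl, det_symPow_submatrix_castAdd_of_lower rfl]
    simp
  rw [← Matrix.det_mul] at unitriangular
  rw [det_colMatrix_submatrix h1, det_rowMatrix_submatrix, mul_assoc, ← Matrix.det_mul]
  generalize symPow (N + M) !![1, ξ; 0, 1] = U at unitriangular ⊢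
  generalize symPow (N + M) !![(1 : ℂ), 0; -1, 1] = L at unitriangular ⊢
  refine (congrArg (_ * ·) (.trans (congrArg _ ?_) unitriangular)).trans (mul_one _)
  exact Matrix.submatrix_mul_equiv (U.submatrix (Fin.castAdd M) (Fin.castAdd M))
    (L.submatrix (Fin.castAdd M) (Fin.castAdd M)) id Fin.revPerm id

end Weights

section Positions

variable {N : ℕ} {Y : YoungDiagram}

/-- The position in `ℕ` of the particle of row `i` when only the `N` first rows are kept: the
element `λ_i - i - 1` of the point configuration of `Y`, shifted by `N`. -/
def rowPosition (N : ℕ) (Y : YoungDiagram) (i : ℕ) : ℕ := Y.rowLen i + (N - 1 - i)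

/-- The position of the hole of column `j`, with the shift by `N` of `rowPosition`. -/
def colPosition (N : ℕ) (Y : YoungDiagram) (j : ℕ) : ℕ := j + (N - Y.colLen j)

lemma strictAntiOn_rowPosition (N : ℕ) (Y : YoungDiagram) :
    StrictAntiOn (rowPosition N Y) (Set.Iio N) := by
  intro i _ k hk hik
  have := Y.rowLen_anti i k hik.le
  have : k < N := hk
  unfold rowPosition
  omega

lemma strictMono_colPosition (N : ℕ) (Y : YoungDiagram) : StrictMono (colPosition N Y) := by
  intro j k hjk
  have := Y.colLen_anti j k hjk.le
  unfold colPosition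
  omega

lemma lt_colLen_iff_lt_rowLen (Y : YoungDiagram) {i j : ℕ} :
    i < Y.colLen j ↔ j < Y.rowLen i := by
  rw [← YoungDiagram.mem_iff_lt_colLen, YoungDiagram.mem_iff_lt_rowLen]

lemma colLen_le_of_rowLen_eq_zero (hN : Y.rowLen N = 0) (j : ℕ) : Y.colLen j ≤ N :=
  not_lt.mp fun lt => by simpa [hN] using (lt_colLen_iff_lt_rowLen Y).mp lt

lemma rowLen_eq_zero_of_le (hN : Y.rowLen N = 0) {k : ℕ} (hk : N ≤ k) : Y.rowLen k = 0 :=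
  Nat.le_zero.mp (hN ▸ Y.rowLen_anti N k hk)

lemma rowPosition_ne_colPosition (hN : Y.rowLen N = 0) {k : ℕ} (hk : k < N) (j : ℕ) :
    rowPosition N Y k ≠ colPosition N Y j := by
  have := colLen_le_of_rowLen_eq_zero hN j
  have := lt_colLen_iff_lt_rowLen Y (i := k) (j := j)
  unfold rowPosition colPosition
  omega

lemma disjoint_image_colPosition_image_rowPosition (hN : Y.rowLen N = 0) (i l : ℕ) :
    Disjoint ((Finset.range l).image (colPosition N Y))
      ((Finset.Ioo i N).image (rowPosition N Y)) := by
  simp only [Finset.disjoint_left, Finset.mem_image, not_exists, not_and]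
  rintro _ ⟨j, -, rfl⟩ k hk
  exact rowPosition_ne_colPosition hN (Finset.mem_Ioo.mp hk).2 j

lemma image_colPosition_union_image_rowPosition (hN : Y.rowLen N = 0) {i : ℕ} (hi : i < N) :
    (Finset.range (Y.rowLen i)).image (colPosition N Y) ∪
      (Finset.Ioo i N).image (rowPosition N Y) = Finset.range (rowPosition N Y i) := by
  refine Finset.eq_of_subset_of_card_le (Finset.union_subset ?_ ?_) ?_
  · refine Finset.image_subset_iff.mpr fun j hj => Finset.mem_range.mpr ?_
    have := (lt_colLen_iff_lt_rowLen Y).mpr (Finset.mem_range.mp hj)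
    have := Finset.mem_range.mp hj
    unfold colPosition rowPosition
    omega
  · refine Finset.image_subset_iff.mpr fun k hk => Finset.mem_range.mpr ?_
    exact strictAntiOn_rowPosition N Y hi (Finset.mem_Ioo.mp hk).2 (Finset.mem_Ioo.mp hk).1
  · rw [Finset.card_union_of_disjoint (disjoint_image_colPosition_image_rowPosition hN _ _),
      Finset.card_image_of_injective _ (strictMono_colPosition N Y).injective,
      Finset.card_image_of_injOn ((strictAntiOn_rowPosition N Y).injOn.mono fun k hk =>
        (Finset.mem_Ioo.mp hk).2), Finset.card_range, Finset.card_range, Nat.card_Ioo]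
    unfold rowPosition
    omega

lemma hookLen_eq_rowPosition_sub_colPosition (hN : Y.rowLen N = 0) {i j : ℕ}
    (hj : j < Y.rowLen i) : hookLen Y (i, j) = rowPosition N Y i - colPosition N Y j := by
  have := (lt_colLen_iff_lt_rowLen Y).mpr hj
  have := colLen_le_of_rowLen_eq_zero hN j
  simp only [hookLen, rowPosition, colPosition]
  omega

lemma prod_hookLen_mul_prod_rowPosition_sub (hN : Y.rowLen N = 0) {i : ℕ} (hi : i < N) :
    (∏ j ∈ Finset.range (Y.rowLen i), (hookLen Y (i, j) : ℂ)) *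
      ∏ k ∈ Finset.Ioo i N, ((rowPosition N Y i : ℂ) - rowPosition N Y k) =
    (rowPosition N Y i).factorial := by
  have hooks : ∏ j ∈ Finset.range (Y.rowLen i), hookLen Y (i, j) =
      ∏ v ∈ (Finset.range (Y.rowLen i)).image (colPosition N Y), (rowPosition N Y i - v) := by
    rw [Finset.prod_image (strictMono_colPosition N Y).injective.injOn]
    exact Finset.prod_congr rfl fun j hj =>
      hookLen_eq_rowPosition_sub_colPosition hN (Finset.mem_range.mp hj)
  have gaps : ∏ k ∈ Finset.Ioo i N, ((rowPosition N Y i : ℂ) - rowPosition N Y k) =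
      (∏ v ∈ (Finset.Ioo i N).image (rowPosition N Y), (rowPosition N Y i - v) : ℕ) := by
    rw [Finset.prod_image ((strictAntiOn_rowPosition N Y).injOn.mono fun k hk =>
      (Finset.mem_Ioo.mp hk).2), Nat.cast_prod]
    exact Finset.prod_congr rfl fun k hk => (Nat.cast_sub (strictAntiOn_rowPosition N Y hi
      (Finset.mem_Ioo.mp hk).2 (Finset.mem_Ioo.mp hk).1).le).symm
  rw [← Nat.cast_prod, gaps, hooks, ← Nat.cast_mul,
    ← Finset.prod_union (disjoint_image_colPosition_image_rowPosition hN _ _),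
    image_colPosition_union_image_rowPosition hN hi, ← Nat.descFactorial_self,
    Nat.descFactorial_eq_prod_range]

end Positions

section BoxWeights

variable {N M : ℕ} {Y : YoungDiagram}

lemma prod_natCast_add_cellContent {i : ℕ} (hi : i < N) (l : ℕ) :
    ∏ j ∈ Finset.range l, ((N : ℂ) + cellContent (i, j)) =
      (l + (N - 1 - i)).factorial / (N - 1 - i).factorial := by
  obtain ⟨k, rfl⟩ : ∃ k, N = i + 1 + k := Nat.exists_eq_add_of_le hi
  rw [show i + 1 + k - 1 - i = k by omega,
    eq_div_iff (Nat.cast_ne_zero.mpr (Nat.factorial_ne_zero _)), mul_comm, add_comm l,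
    ← Nat.factorial_mul_ascFactorial, Nat.ascFactorial_eq_prod_range]
  push_cast [cellContent]
  exact congrArg _ (Finset.prod_congr rfl fun j _ => by ring)

lemma prod_neg_natCast_add_cellContent {i l : ℕ} (hl : l ≤ M + i) :
    ∏ j ∈ Finset.range l, (-(M : ℂ) + cellContent (i, j)) =
      (-1) ^ l * ((M + i).factorial / (M + i - l).factorial) := by
  rw [← Nat.factorial_mul_descFactorial hl, Nat.cast_mul,
    mul_div_cancel_left₀ _ (Nat.cast_ne_zero.mpr (Nat.factorial_ne_zero _)),
    Nat.descFactorial_eq_prod_range, Nat.cast_prod, ← Finset.card_range l, ← Finset.prod_const,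
    Finset.card_range, ← Finset.prod_mul_distrib]
  refine Finset.prod_congr rfl fun j hj => ?_
  rw [Nat.cast_sub ((Finset.mem_range.mp hj).le.trans hl)]
  push_cast [cellContent]
  ring

lemma prod_zWeight_row (hN : Y.rowLen N = 0) (hM : Y.rowLen 0 ≤ M) {i : ℕ} (hi : i < N) :
    ∏ j ∈ Finset.range (Y.rowLen i), (((N : ℂ) + cellContent (i, j)) *
        (-M + cellContent (i, j)) / (hookLen Y (i, j) : ℂ) ^ 2) =
      (M + i).factorial / ((N - 1 - i).factorial * (N + M - 1).factorial) *
        ((-1) ^ Y.rowLen i * (N + M - 1).choose (rowPosition N Y i) *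
          (∏ k ∈ Finset.Ioo i N, ((rowPosition N Y i : ℂ) - rowPosition N Y k)) ^ 2) := by
  have rowLen_le : Y.rowLen i ≤ M := (Y.rowLen_anti 0 i (Nat.zero_le _)).trans hM
  have position_le : rowPosition N Y i ≤ N + M - 1 := by unfold rowPosition; omega
  have hooks := prod_hookLen_mul_prod_rowPosition_sub hN hi
  have factorial_ne : ∀ m : ℕ, (m.factorial : ℂ) ≠ 0 := fun m =>
    Nat.cast_ne_zero.mpr m.factorial_ne_zero
  have hooks_ne := left_ne_zero_of_mul (hooks.trans_ne (factorial_ne _))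
  rw [Finset.prod_div_distrib, Finset.prod_mul_distrib, Finset.prod_pow,
    prod_natCast_add_cellContent hi, prod_neg_natCast_add_cellContent (rowLen_le.trans (by omega)),
    show Y.rowLen i + (N - 1 - i) = rowPosition N Y i from rfl, Nat.cast_choose ℂ position_le,
    show N + M - 1 - rowPosition N Y i = M + i - Y.rowLen i by unfold rowPosition; omega]
  have ne₁ := factorial_ne (N - 1 - i)
  have ne₂ := factorial_ne (N + M - 1)
  have ne₃ := factorial_ne (M + i - Y.rowLen i)
  have ne₄ := factorial_ne (rowPosition N Y i)
  have gaps_eq := eq_div_of_mul_eq hooks_ne ((mul_comm _ _).trans hooks)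
  rw [gaps_eq]
  field_simp

lemma prod_cells_eq_prod_rows {R : Type*} [CommMonoid R] (hN : Y.rowLen N = 0) (F : ℕ × ℕ → R) :
    ∏ c ∈ Y.cells, F c = ∏ i : Fin N, ∏ j ∈ Finset.range (Y.rowLen i), F (i, j) := by
  rw [Fin.prod_univ_eq_prod_range (fun i => ∏ j ∈ Finset.range (Y.rowLen i), F (i, j))]
  refine Finset.prod_finset_product _ _ _ fun ⟨i, j⟩ => ?_
  have : N ≤ i → Y.rowLen i = 0 := rowLen_eq_zero_of_le hN
  rw [YoungDiagram.mem_cells, YoungDiagram.mem_iff_lt_rowLen, Finset.mem_range, Finset.mem_range]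
  dsimp only
  omega

lemma det_vandermonde_sq_eq_prod {R : Type*} [CommRing R] (v : ℕ → R) :
    (Matrix.vandermonde fun i : Fin N => v i).det ^ 2 =
      ∏ i : Fin N, (∏ k ∈ Finset.Ioo (i : ℕ) N, (v i - v k)) ^ 2 := by
  rw [Matrix.det_vandermonde, ← Finset.prod_pow]
  refine Finset.prod_congr rfl fun i _ => ?_
  rw [← Fin.map_valEmbedding_Ioi, Finset.prod_map, ← Finset.prod_pow, ← Finset.prod_pow]
  exact Finset.prod_congr rfl fun k _ => by rw [Fin.valEmbedding_apply]; ring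

theorem exists_zWeight_mul_pow_card_eq (N M : ℕ) {ξ : ℂ} (hξ : ξ ≠ 0) :
    ∃ c : ℂ, ∀ Y : YoungDiagram, Y.rowLen N = 0 → Y.rowLen 0 ≤ M →
      zWeight N (-M) Y * ξ ^ Y.card = c * particleWeight N M ξ fun i => rowPosition N Y i := by
  refine ⟨∏ i : Fin N, (M + i).factorial / ((N - 1 - i).factorial * (N + M - 1).factorial) /
    (-ξ) ^ (N - 1 - i : ℕ), fun Y hN hM => ?_⟩
  have card : ξ ^ Y.card = ∏ i : Fin N, ξ ^ Y.rowLen i := by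
    simpa using prod_cells_eq_prod_rows hN fun _ => ξ
  rw [zWeight, prod_cells_eq_prod_rows hN, card, particleWeight,
    det_vandermonde_sq_eq_prod fun i => (rowPosition N Y i : ℂ)]
  simp only [← Finset.prod_mul_distrib]
  refine Finset.prod_congr rfl fun i _ => ?_
  rw [prod_zWeight_row hN hM i.2]
  have pow_ne : (-ξ) ^ (N - 1 - i : ℕ) ≠ 0 := pow_ne_zero _ (neg_ne_zero.mpr hξ)
  have split : (-ξ) ^ rowPosition N Y i =
      (-1) ^ Y.rowLen i * ξ ^ Y.rowLen i * (-ξ) ^ (N - 1 - i : ℕ) := by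
    rw [rowPosition, pow_add, neg_pow ξ (Y.rowLen i)]
  rw [split]
  field_simp

theorem zWeight_eq_zero_of_not_box (h : ¬(Y.rowLen N = 0 ∧ Y.rowLen 0 ≤ M)) :
    zWeight N (-M) Y = 0 := by
  rcases not_and_or.mp h with hN | hM
  · refine Finset.prod_eq_zero (i := (N, 0)) ?_ (by simp [cellContent])
    exact YoungDiagram.mem_iff_lt_rowLen.mpr (Nat.pos_of_ne_zero hN)
  · refine Finset.prod_eq_zero (i := (0, M)) ?_ (by simp [cellContent])
    exact YoungDiagram.mem_iff_lt_rowLen.mpr (not_le.mp hM)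

end BoxWeights

section BoxConfigurations

/-- The Young diagrams with at most `N` rows and at most `M` columns. -/
abbrev BoxDiagram (N M : ℕ) : Type := {Y : YoungDiagram // Y.rowLen N = 0 ∧ Y.rowLen 0 ≤ M}

variable {N M : ℕ}

/-- The positions of the particles of a Young diagram contained in a box. -/
def boxPositions (Y : BoxDiagram N M) (i : Fin N) : Fin (N + M) :=
  ⟨rowPosition N Y.1 i, by
    have := Y.1.rowLen_anti 0 i (Nat.zero_le _)
    have := Y.2.2
    unfold rowPosition
    omega⟩

lemma strictAnti_boxPositions (Y : BoxDiagram N M) : StrictAnti (boxPositions Y) :=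
  fun i k hik => strictAntiOn_rowPosition N Y.1 i.2 k.2 hik

lemma boxPositions_injective : Function.Injective (boxPositions (N := N) (M := M)) := by
  intro Y Y' h
  have rowLen_eq : ∀ i, Y.1.rowLen i = Y'.1.rowLen i := by
    intro i
    by_cases hi : i < N
    · have := congrArg Fin.val (congrFun h ⟨i, hi⟩)
      simp only [boxPositions, rowPosition] at this
      omega
    · rw [rowLen_eq_zero_of_le Y.2.1 (not_lt.mp hi), rowLen_eq_zero_of_le Y'.2.1 (not_lt.mp hi)]
  refine Subtype.ext (YoungDiagram.ext (Finset.ext fun ⟨i, j⟩ => ?_))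
  simp only [YoungDiagram.mem_cells, YoungDiagram.mem_iff_lt_rowLen, rowLen_eq]

lemma rev_le_of_strictAnti {f : Fin N → Fin (N + M)} (hf : StrictAnti f) (i : Fin N) :
    (i.rev : ℕ) ≤ f i := by
  have := Finset.card_le_card_of_injOn (s := Finset.Ioi i) (t := Finset.Iio (f i)) f
    (fun k hk => Finset.mem_coe.mpr (Finset.mem_Iio.mpr (hf (Finset.mem_Ioi.mp hk))))
    hf.injective.injOn
  rw [Fin.card_Ioi, Fin.card_Iio] at this
  rw [Fin.val_rev]
  omega

lemma antitone_sub_rev_of_strictAnti {f : Fin N → Fin (N + M)} (hf : StrictAnti f) :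
    Antitone fun i : Fin N => (f i : ℕ) - i.rev := by
  intro i k hik
  have gap : (Finset.Ioc i k).card ≤ (Finset.Ico (f k) (f i)).card :=
    Finset.card_le_card_of_injOn f (fun l hl => by
      rw [Finset.coe_Ioc] at hl
      exact Finset.mem_coe.mpr (Finset.mem_Ico.mpr ⟨hf.antitone hl.2, hf hl.1⟩))
      hf.injective.injOn
  have := rev_le_of_strictAnti hf k
  rw [Fin.card_Ioc, Fin.card_Ico] at gap
  simp only [Fin.val_rev] at this ⊢
  have : (i : ℕ) ≤ k := hik
  have : (f k : ℕ) ≤ f i := hf.antitone hik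
  omega

lemma exists_boxPositions_eq {f : Fin N → Fin (N + M)} (hf : StrictAnti f) :
    ∃ Y : BoxDiagram N M, boxPositions Y = f := by
  have sorted : (List.ofFn fun i : Fin N => (f i : ℕ) - i.rev).SortedGE :=
    List.sortedGE_ofFn_iff.mpr (antitone_sub_rev_of_strictAnti hf)
  let Y := YoungDiagram.ofRowLens _ sorted
  have rowLen_eq (i : Fin N) : Y.rowLen i = f i - i.rev :=
    (YoungDiagram.rowLen_ofRowLens (i.cast List.length_ofFn.symm)).trans (List.getElem_ofFn _)
  have rowLen_N : Y.rowLen N = 0 := by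
    refine Nat.eq_zero_of_not_pos fun pos => ?_
    obtain ⟨lt, -⟩ := YoungDiagram.mem_ofRowLens.mp (YoungDiagram.mem_iff_lt_rowLen.mpr pos)
    simp at lt
  have rowLen_zero : Y.rowLen 0 ≤ M := by
    rcases N.eq_zero_or_pos with rfl | pos
    · exact rowLen_N.trans_le (Nat.zero_le M)
    · have := rowLen_eq ⟨0, pos⟩
      have := (f ⟨0, pos⟩).2
      simp only [Fin.val_rev] at *
      omega
  refine ⟨⟨Y, rowLen_N, rowLen_zero⟩, funext fun i => Fin.ext ?_⟩
  have := rev_le_of_strictAnti hf i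
  simp only [boxPositions, rowPosition, rowLen_eq, Fin.val_rev] at *
  omega

/-- Young diagrams in a box correspond to the configurations of `N` particles on `N + M` sites. -/
def boxPositionsEquiv (N M : ℕ) : BoxDiagram N M ≃ {f : Fin N → Fin (N + M) // StrictAnti f} :=
  Equiv.ofBijective (fun Y => ⟨boxPositions Y, strictAnti_boxPositions Y⟩)
    ⟨fun _ _ h => boxPositions_injective (congrArg Subtype.val h), fun f =>
      (exists_boxPositions_eq f.2).imp fun _ h => Subtype.ext h⟩

lemma rowLen_bot (i : ℕ) : (⊥ : YoungDiagram).rowLen i = 0 :=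
  Nat.eq_zero_of_not_pos fun pos =>
    YoungDiagram.notMem_bot _ (YoungDiagram.mem_iff_lt_rowLen.mpr pos)

theorem det_colMatrix_mul_det_rowMatrix_boxPositions {ξ : ℂ} (h0 : ξ ≠ 0) (h1 : ξ ≠ 1)
    (Y : BoxDiagram N M) :
    ((colMatrix N M (ξ / (ξ - 1))).submatrix id (boxPositions Y)).det *
        ((rowMatrix N M (ξ / (ξ - 1))).submatrix (boxPositions Y) id).det =
      ((1 - ξ)⁻¹) ^ (N * M) * (zWeight N (-M) Y * ξ ^ Y.1.card) := by
  obtain ⟨c, minors⟩ := exists_det_colMatrix_mul_det_rowMatrix_eq N M h0 h1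
  obtain ⟨d, weights⟩ := exists_zWeight_mul_pow_card_eq N M h0
  let vacuum : BoxDiagram N M := ⟨⊥, rowLen_bot N, (rowLen_bot 0).trans_le (Nat.zero_le M)⟩
  have positions_vacuum : boxPositions vacuum = Fin.castAdd M ∘ Fin.rev := by
    funext i
    refine Fin.ext ?_
    simp only [boxPositions, rowPosition, vacuum, rowLen_bot, Function.comp_apply,
      Fin.val_castAdd, Fin.val_rev]
    omega
  have minors_vacuum := minors (boxPositions vacuum)
  rw [positions_vacuum, det_colMatrix_mul_det_rowMatrix_vacuum N M h1, ← positions_vacuum]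
    at minors_vacuum
  have weights_vacuum := weights vacuum.1 vacuum.2.1 vacuum.2.2
  simp only [vacuum, zWeight, YoungDiagram.cells_bot, Finset.prod_empty, YoungDiagram.card,
    Finset.card_empty, pow_zero, mul_one] at weights_vacuum
  calc _ = c * particleWeight N M ξ (fun i => boxPositions Y i) * 1 := by rw [minors, mul_one]
    _ = c * particleWeight N M ξ (fun i => boxPositions vacuum i) *
          (d * particleWeight N M ξ fun i => rowPosition N Y.1 i) := by
      rw [weights_vacuum]
      simp only [boxPositions, vacuum]
      ring
    _ = _ := by rw [← minors_vacuum, weights Y.1 Y.2.1 Y.2.2]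

end BoxConfigurations

section PointConfigurations

/-- The point configuration `S(λ) = {λ_i - i + 1/2 : i ≥ 1}`, each half-integer `a + 1/2` being
encoded by the integer `a`. -/
def pointConfiguration (Y : YoungDiagram) : Set ℤ := {a | ∃ k : ℕ, a = Y.rowLen k - k - 1}

lemma sub_mem_pointConfiguration_iff {N M : ℕ} (Y : BoxDiagram N M) (a : Fin (N + M)) :
    ((a : ℕ) : ℤ) - N ∈ pointConfiguration Y ↔ a ∈ Set.range (boxPositions Y) := by
  constructor
  · rintro ⟨k, hk⟩
    have lt : k < N := by
      have := rowLen_eq_zero_of_le Y.2.1 (k := k)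
      omega
    refine ⟨⟨k, lt⟩, Fin.ext ?_⟩
    simp only [boxPositions, rowPosition]
    omega
  · rintro ⟨i, rfl⟩
    refine ⟨i, ?_⟩
    simp only [boxPositions, rowPosition]
    omega

end PointConfigurations

section CorrelationSeries

open PowerSeries

lemma cells_subset_range_card_product (Y : YoungDiagram) :
    Y.cells ⊆ Finset.range Y.card ×ˢ Finset.range Y.card := by
  intro c hc
  have row := YoungDiagram.mem_iff_lt_rowLen.mp hc
  have col := YoungDiagram.mem_iff_lt_colLen.mp hc
  rw [YoungDiagram.rowLen_eq_card] at row
  rw [YoungDiagram.colLen_eq_card] at col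
  exact Finset.mem_product.mpr
    ⟨Finset.mem_range.mpr (col.trans_le (Finset.card_filter_le _ _)),
      Finset.mem_range.mpr (row.trans_le (Finset.card_filter_le _ _))⟩

lemma finite_setOf_card_eq (n : ℕ) : {Y : YoungDiagram | Y.card = n}.Finite := by
  refine Set.Finite.of_injOn (f := YoungDiagram.cells)
    (t := ((Finset.range n ×ˢ Finset.range n).powerset : Set (Finset (ℕ × ℕ)))) ?_
    (fun _ _ _ _ h => YoungDiagram.ext h) (Finset.finite_toSet _)
  rintro Y rfl
  exact Finset.mem_coe.mpr (Finset.mem_powerset.mpr (cells_subset_range_card_product Y))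

/-- The Young diagrams with `n` cells. -/
def diagramsOfCard (n : ℕ) : Finset YoungDiagram := (finite_setOf_card_eq n).toFinset

@[simp]
lemma mem_diagramsOfCard {n : ℕ} {Y : YoungDiagram} : Y ∈ diagramsOfCard n ↔ Y.card = n :=
  Set.Finite.mem_toFinset _

variable {s : ℕ}

/-- The power series in `ξ` of `(1 - ξ) ^ (-z z') ρ(X)`, the correlation function of the mixed
`z`-measure without its normalising factor. -/
def correlationSeries (z z' : ℂ) (x : Fin s → ℤ) : ℂ⟦X⟧ :=
  mk fun n => ∑ Y ∈ diagramsOfCard n,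
    if ∀ p, x p ∈ pointConfiguration Y then zWeight z z' Y else 0

lemma correlationSeries_mem_absConvergentAt (z z' : ℂ) (x : Fin s → ℤ) {ξ : ℂ}
    (h : Summable fun Y => ‖(if ∀ p, x p ∈ pointConfiguration Y then zWeight z z' Y else 0) *
      ξ ^ Y.card‖) :
    (correlationSeries z z' x, ∑' Y, (if ∀ p, x p ∈ pointConfiguration Y then zWeight z z' Y
      else 0) * ξ ^ Y.card) ∈ absConvergentAt ξ :=
  mk_sum_mem_absConvergentAt (fun _ _ => mem_diagramsOfCard.mp)
    (fun _ _ => mem_diagramsOfCard.mpr rfl) h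

lemma zWeight_mem_parameterPolynomials (Y : YoungDiagram) :
    (fun p : ℂ × ℂ => zWeight p.1 p.2 Y) ∈ parameterPolynomials := by
  have expand : (fun p : ℂ × ℂ => zWeight p.1 p.2 Y) = ∏ c ∈ Y.cells,
      ((hookLen Y c : ℂ) ^ 2)⁻¹ • ((Prod.fst + algebraMap ℂ _ (cellContent c : ℂ)) *
        (Prod.snd + algebraMap ℂ _ (cellContent c : ℂ))) := by
    ext p
    simp [zWeight, div_eq_inv_mul]
  exact expand ▸ prod_mem fun c _ => Subalgebra.smul_mem _
    (mul_mem (add_mem fst_mem_parameterPolynomials (algebraMap_mem _ _))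
      (add_mem snd_mem_parameterPolynomials (algebraMap_mem _ _))) _

lemma correlationSeries_mem_polynomialSeries (x : Fin s → ℤ) :
    (fun p : ℂ × ℂ => correlationSeries p.1 p.2 x) ∈ polynomialSeries := fun n => by
  have expand : (fun p : ℂ × ℂ => coeff n (correlationSeries p.1 p.2 x)) =
      ∑ Y ∈ diagramsOfCard n, if ∀ p, x p ∈ pointConfiguration Y
        then fun p : ℂ × ℂ => zWeight p.1 p.2 Y else 0 := by
    ext p
    simp only [correlationSeries, coeff_mk, Finset.sum_apply]
    exact Finset.sum_congr rfl fun Y _ => by split_ifs <;> rfl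
  refine expand ▸ sum_mem fun Y _ => ?_
  split_ifs
  exacts [zWeight_mem_parameterPolynomials Y, zero_mem _]

/-- The power series in `ξ` of `(1 - ξ) ^ (-z z') det K`. -/
def determinantSeries (z z' : ℂ) (x : Fin s → ℤ) : ℂ⟦X⟧ :=
  rescale (-1 : ℂ) (binomialSeries ℂ (s - z * z')) *
    (Matrix.of fun p q => kernelSeries z z' (x p) (x q)).det

lemma determinantSeries_mem_absConvergentAt (z z' : ℂ) (x : Fin s → ℤ) {α β ξ : ℂ}
    (hξ : ‖ξ‖ < 1 / 2) (hβ : β ≠ 0) (hαβ : α * β = ξ / (ξ - 1)) :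
    (determinantSeries z z' x, (1 - ξ) ^ (-(z * z')) *
      (Matrix.of fun p q => kerK α β z z' (x p) (x q)).det) ∈ absConvergentAt ξ := by
  have h1 : 1 - ξ ≠ 0 := fun h => by norm_num [← sub_eq_zero.mp h] at hξ
  let k : Matrix (Fin s) (Fin s) ℂ := Matrix.of fun p q =>
    kerK α β z z' (x p) (x q) / (β ^ (x p - x q) * (1 - ξ))
  have kernel : (Matrix.of fun p q => kerK α β z z' (x p) (x q)) =
      Matrix.of fun p q => β ^ (x p - x q) * (1 - ξ) * k p q := by
    ext p q
    exact (mul_div_cancel₀ _ (mul_ne_zero (zpow_ne_zero _ hβ) h1)).symm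
  have value : (1 - ξ) ^ (-(z * z')) * (Matrix.of fun p q => kerK α β z z' (x p) (x q)).det =
      (1 - ξ) ^ (s - z * z') * k.det := by
    rw [kernel, det_zpow_sub_mul hβ, sub_eq_neg_add (s : ℂ), Complex.cpow_add _ _ h1,
      Complex.cpow_natCast, mul_assoc]
  rw [value, determinantSeries, ← Prod.mk_mul_mk]
  exact mul_mem (rescale_neg_one_binomialSeries_mem_absConvergentAt (by linarith) _)
    (det_mem_absConvergentAt fun p q => kernelSeries_mem_absConvergentAt z z' _ _ hξ hβ hαβ)

lemma determinantSeries_mem_polynomialSeries (x : Fin s → ℤ) :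
    (fun p : ℂ × ℂ => determinantSeries p.1 p.2 x) ∈ polynomialSeries := by
  have binomial : (fun p : ℂ × ℂ => rescale (-1 : ℂ) (binomialSeries ℂ (s - p.1 * p.2))) ∈
      polynomialSeries := fun n => by
    have expand : (fun p : ℂ × ℂ => coeff n (rescale (-1 : ℂ) (binomialSeries ℂ (s - p.1 * p.2)))) =
        ((-1) ^ n : ℂ) • fun p : ℂ × ℂ => Ring.choose (s - p.1 * p.2) n := by
      ext p
      simp [binomialSeries_coeff]
    exact expand ▸ Subalgebra.smul_mem _ (ringChoose_mem_parameterPolynomials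
      (sub_mem (natCast_mem _ s)
        (mul_mem fst_mem_parameterPolynomials snd_mem_parameterPolynomials)) n) _
  exact mul_mem binomial (det_mem_polynomialSeries fun p q => kernelSeries_mem_polynomialSeries _ _)

end CorrelationSeries

section Identity

variable {s N M : ℕ}

lemma finite_support_zWeight (N M : ℕ) : (Function.support (zWeight N (-M))).Finite :=
  have : Finite {Y : YoungDiagram | Y.rowLen N = 0 ∧ Y.rowLen 0 ≤ M} :=
    .of_equiv _ (boxPositionsEquiv N M).symm
  (Set.toFinite {Y : YoungDiagram | Y.rowLen N = 0 ∧ Y.rowLen 0 ≤ M}).subset fun _ hY =>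
    not_not.mp (mt zWeight_eq_zero_of_not_box hY)

lemma tsum_boxDiagram_eq_sum (w : (Fin N → Fin (N + M)) → ℂ) :
    ∑' Y : BoxDiagram N M, w (boxPositions Y) = ∑ f with StrictAnti f, w f := by
  calc _ = ∑' f : {f : Fin N → Fin (N + M) // StrictAnti f}, w f :=
        (boxPositionsEquiv N M).tsum_eq fun f => w f.1
    _ = _ := by
      rw [tsum_fintype]
      exact (Finset.sum_subtype _ (by simp) w).symm

theorem tsum_zWeight_mul_pow_card_eq_det (N M : ℕ) {x : Fin s → Fin (N + M)}
    (hx : Function.Injective x) {ξ : ℂ} (h0 : ξ ≠ 0) (h1 : ξ ≠ 1) :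
    ∑' Y, (if ∀ p, (x p : ℤ) - N ∈ pointConfiguration Y then zWeight N (-M) Y else 0) *
        ξ ^ Y.card =
      (1 - ξ) ^ (N * M) *
        (Matrix.of fun p q => kerK (ξ / (ξ - 1)) 1 N (-M) ((x p : ℤ) - N) ((x q : ℤ) - N)).det := by
  set G := rowMatrix N M (ξ / (ξ - 1))
  set H := colMatrix N M (ξ / (ξ - 1))
  have norm_ne : (1 - ξ) ^ (N * M) ≠ 0 := pow_ne_zero _ (sub_ne_zero.mpr h1.symm)
  have kernel : (Matrix.of fun p q => kerK (ξ / (ξ - 1)) 1 N (-M) ((x p : ℤ) - N) ((x q : ℤ) - N)) =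
      (G * H).submatrix x x := by
    ext p q
    exact kerK_eq_rowMatrix_mul_colMatrix _ _ _
  let w : (Fin N → Fin (N + M)) → ℂ := fun f => if Set.range x ⊆ Set.range f then
    (1 - ξ) ^ (N * M) * ((H.submatrix id f).det * (G.submatrix f id).det) else 0
  calc _ = ∑' Y : BoxDiagram N M, (if ∀ p, (x p : ℤ) - N ∈ pointConfiguration Y.1
          then zWeight N (-M) Y.1 else 0) * ξ ^ Y.1.card := by
        refine (tsum_subtype_eq_of_support_subset
          (s := {Y : YoungDiagram | Y.rowLen N = 0 ∧ Y.rowLen 0 ≤ M})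
          fun Y hY => not_not.mp fun not_box => hY ?_).symm
        rw [zWeight_eq_zero_of_not_box not_box, ite_self, zero_mul]
    _ = ∑' Y : BoxDiagram N M, w (boxPositions Y) := by
        refine tsum_congr fun Y => ?_
        simp only [sub_mem_pointConfiguration_iff, ← Set.range_subset_iff, w, ite_mul, zero_mul]
        rw [det_colMatrix_mul_det_rowMatrix_boxPositions h0 h1, inv_pow,
          mul_inv_cancel_left₀ norm_ne]
    _ = _ := by
        rw [tsum_boxDiagram_eq_sum, kernel, ← sum_strictAnti_det_mul_det_of_range_subset
          (colMatrix_mul_rowMatrix N M _) hx, Finset.mul_sum, ← Finset.sum_filter,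
          Finset.filter_filter]

lemma determinantSeries_eq_correlationSeries_of_lt (N M : ℕ) {x : Fin s → Fin (N + M)}
    (hx : Function.Injective x) :
    determinantSeries N (-M) (fun p => (x p : ℤ) - N) =
      correlationSeries N (-M) fun p => (x p : ℤ) - N := by
  refine eq_of_forall_Ioo_mem_absConvergentAt one_half_pos
    (v := fun ξ => (1 - ξ) ^ (N * M) * (Matrix.of fun p q =>
      kerK (ξ / (ξ - 1)) 1 N (-M) ((x p : ℤ) - N) ((x q : ℤ) - N)).det)
    (fun ξ hξ => ?_) fun ξ hξ => ?_
  · have := determinantSeries_mem_absConvergentAt (N : ℂ) (-M) (fun p => (x p : ℤ) - N)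
      (ξ := ξ) (by simpa [abs_of_pos hξ.1] using hξ.2) one_ne_zero (mul_one _)
    rwa [mul_neg, neg_neg, ← Nat.cast_mul, Complex.cpow_natCast] at this
  · rw [← tsum_zWeight_mul_pow_card_eq_det N M hx (by exact_mod_cast hξ.1.ne')
      (by exact_mod_cast (by linarith [hξ.2] : ξ ≠ 1))]
    refine correlationSeries_mem_absConvergentAt _ _ _ (summable_of_hasFiniteSupport
      ((finite_support_zWeight N M).subset fun Y hY zero => hY ?_))
    simp only [zero, ite_self, zero_mul, norm_zero]

theorem determinantSeries_eq_correlationSeries (z z' : ℂ) {x : Fin s → ℤ}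
    (hx : Function.Injective x) : determinantSeries z z' x = correlationSeries z z' x := by
  refine congrFun (eq_of_mem_polynomialSeries (determinantSeries_mem_polynomialSeries x)
    (correlationSeries_mem_polynomialSeries x) (∑ p, (x p).natAbs + 1) fun N hN M hM => ?_) (z, z')
  have bound : ∀ p, (x p).natAbs ≤ ∑ p, (x p).natAbs := fun p =>
    Finset.single_le_sum (f := fun p => (x p).natAbs) (fun _ _ => Nat.zero_le _) (Finset.mem_univ p)
  obtain ⟨y, rfl⟩ : ∃ y : Fin s → Fin (N + M), x = fun p => (y p : ℤ) - N :=
    ⟨fun p => ⟨(x p + N).toNat, by have := bound p; omega⟩, funext fun p => by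
      have := bound p
      dsimp only
      omega⟩
  exact determinantSeries_eq_correlationSeries_of_lt N M fun p q h => hx (by simp only [h])

end Identity

section Summability

open ComplexConjugate

lemma zWeight_conj_eq_norm (z : ℂ) (Y : YoungDiagram) :
    zWeight z (conj z) Y = ‖zWeight z (conj z) Y‖ := by
  have nonneg : 0 ≤ ∏ c ∈ Y.cells, Complex.normSq (z + cellContent c) / (hookLen Y c : ℝ) ^ 2 :=
    Finset.prod_nonneg fun c _ => div_nonneg (Complex.normSq_nonneg _) (sq_nonneg _)
  have eq : zWeight z (conj z) Y =
      (∏ c ∈ Y.cells, Complex.normSq (z + cellContent c) / (hookLen Y c : ℝ) ^ 2 : ℝ) := by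
    simp [zWeight, ← Complex.mul_conj]
  rw [eq, Complex.norm_real, Real.norm_of_nonneg nonneg]

lemma norm_zWeight_sq (z z' : ℂ) (Y : YoungDiagram) :
    ‖zWeight z z' Y‖ ^ 2 = ‖zWeight z (conj z) Y‖ * ‖zWeight z' (conj z') Y‖ := by
  have norm_conj (w : ℂ) (n : ℤ) : ‖conj w + n‖ = ‖w + n‖ := by
    rw [← Complex.norm_conj, map_add, Complex.conj_conj, map_intCast]
  simp only [zWeight, norm_prod, ← Finset.prod_pow, ← Finset.prod_mul_distrib, norm_div, norm_mul,
    norm_conj]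
  exact Finset.prod_congr rfl fun c _ => by ring

lemma summable_of_summable_sum_fiber {ι : Type*} {f : ι → ℝ} (hf : ∀ i, 0 ≤ f i) {g : ι → ℕ}
    {S : ℕ → Finset ι} (hS : ∀ i, i ∈ S (g i)) (h : Summable fun n => ∑ i ∈ S n, f i) :
    Summable f := by
  refine summable_of_sum_le hf (c := ∑' n, ∑ i ∈ S n, f i) fun u => ?_
  calc ∑ i ∈ u, f i = ∑ n ∈ u.image g, ∑ i ∈ u with g i = n, f i :=
        (Finset.sum_fiberwise_of_maps_to (fun _ => Finset.mem_image_of_mem g) f).symm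
    _ ≤ ∑ n ∈ u.image g, ∑ i ∈ S n, f i := Finset.sum_le_sum fun n _ =>
        Finset.sum_le_sum_of_subset_of_nonneg
          (fun i hi => (Finset.mem_filter.mp hi).2 ▸ hS i) fun i _ _ => hf i
    _ ≤ ∑' n, ∑ i ∈ S n, f i := h.sum_le_tsum _ fun n _ => Finset.sum_nonneg fun i _ => hf i

lemma summable_norm_zWeight_conj_mul_pow_card (z : ℂ) {ξ : ℂ} (hξ : ‖ξ‖ < 1) :
    Summable fun Y : YoungDiagram => ‖zWeight z (conj z) Y * ξ ^ Y.card‖ := by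
  refine summable_of_summable_sum_fiber (fun _ => norm_nonneg _)
    (fun _ => mem_diagramsOfCard.mpr rfl) ?_
  have total := (rescale_neg_one_binomialSeries_mem_absConvergentAt hξ (-(z * conj z))).1
  have series : PowerSeries.rescale (-1 : ℂ) (PowerSeries.binomialSeries ℂ (-(z * conj z))) =
      correlationSeries z (conj z) (Fin.elim0 : Fin 0 → ℤ) := by
    rw [← determinantSeries_eq_correlationSeries z (conj z) (Function.injective_of_subsingleton _)]
    simp [determinantSeries]
  refine total.congr fun n => ?_
  have coeff : PowerSeries.coeff n (correlationSeries z (conj z) (Fin.elim0 : Fin 0 → ℤ)) =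
      (∑ Y ∈ diagramsOfCard n, ‖zWeight z (conj z) Y‖ : ℝ) := by
    simp [correlationSeries, ← zWeight_conj_eq_norm]
  rw [series, coeff, norm_mul, Complex.norm_real,
    Real.norm_of_nonneg (Finset.sum_nonneg fun _ _ => norm_nonneg _), Finset.sum_mul]
  exact Finset.sum_congr rfl fun Y hY => by rw [norm_mul, mem_diagramsOfCard.mp hY]

theorem summable_norm_zWeight_mul_pow_card (z z' : ℂ) {ξ : ℂ} (hξ : ‖ξ‖ < 1) :
    Summable fun Y : YoungDiagram => ‖zWeight z z' Y * ξ ^ Y.card‖ := by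
  refine ((summable_norm_zWeight_conj_mul_pow_card z hξ).add
    (summable_norm_zWeight_conj_mul_pow_card z' hξ)).of_nonneg_of_le
    (fun _ => norm_nonneg _) fun Y => ?_
  simp only [norm_mul, ← add_mul]
  refine mul_le_mul_of_nonneg_right (abs_le_of_sq_le_sq' ?_ (by positivity)).2 (norm_nonneg _)
  rw [norm_zWeight_sq]
  nlinarith [norm_nonneg (zWeight z (conj z) Y), norm_nonneg (zWeight z' (conj z') Y)]

end Summability

theorem correlation_eq_det_general (z z' : ℂ) {α β : ℂ} (hβ : β ≠ 0) {ξ : ℝ} (hξ : |ξ| < 1 / 2)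
    (hαβ : α * β = ξ / (ξ - 1)) :
    (∀ i j : ℤ, Summable fun t : ℕ =>
      ‖mcoef α β z z' i (-1 - (t : ℤ)) * mcoefStar α β z z' j (-1 - (t : ℤ))‖) ∧
    Summable (mixedM z z' ξ) ∧
    ∀ (s : ℕ) (x : Fin s → ℤ), Function.Injective x →
      ∑' Y, (if ∀ p, x p ∈ pointConfiguration Y then mixedM z z' ξ Y else 0) =
        (Matrix.of fun p q => kerK α β z z' (x p) (x q)).det := by
  have norm_lt : ‖(ξ : ℂ)‖ < 1 / 2 := by simpa using hξ
  have h1 : 1 - (ξ : ℂ) ≠ 0 := fun h => by norm_num [← sub_eq_zero.mp h] at norm_lt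
  have weights := summable_norm_zWeight_mul_pow_card z z' (norm_lt.trans one_half_lt_one)
  have mixedM_eq : ∀ Y,
      mixedM z z' ξ Y = (1 - (ξ : ℂ)) ^ (z * z') * (zWeight z z' Y * ξ ^ Y.card) := fun Y => by
    rw [mixedM]
    ring
  refine ⟨fun i j => summable_norm_mcoef_mul_mcoefStar z z' i j norm_lt hβ hαβ,
    (weights.of_norm.mul_left _).congr fun Y => (mixedM_eq Y).symm, fun s x hx => ?_⟩
  have correlation := correlationSeries_mem_absConvergentAt z z' x (ξ := ξ)
    (weights.of_nonneg_of_le (fun _ => norm_nonneg _) fun Y => by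
      split_ifs
      · exact le_rfl
      · simpa using mul_nonneg (norm_nonneg _) (pow_nonneg (abs_nonneg ξ) _))
  have determinant := determinantSeries_mem_absConvergentAt z z' x norm_lt hβ hαβ
  rw [determinantSeries_eq_correlationSeries z z' hx] at determinant
  calc _ = (1 - (ξ : ℂ)) ^ (z * z') * ∑' Y, (if ∀ p, x p ∈ pointConfiguration Y
          then zWeight z z' Y else 0) * (ξ : ℂ) ^ Y.card := by
        simp only [mixedM_eq, ← tsum_mul_left, ite_mul, mul_ite, zero_mul, mul_zero]
    _ = _ := by
        rw [mem_absConvergentAt_unique correlation determinant, Complex.cpow_neg,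
          mul_inv_cancel_left₀ (by simp [h1])]

/-- Let `z ≠ 0`, `z' = conj z`, `ξ ∈ (0, 1/2)`, `α = √ξ/(ξ−1)`, `β = √ξ`,
and let `K(i,j) = Σ_{m ∈ ℤ_{<0}+1/2} ⟨i|m⟩⟨j|m⟩*` (an absolutely convergent series).
Then for every finite set `X = {x_1, …, x_s}` of distinct half-integers (encoded by distinct
integers `x p`, the half-integer being `x p + 1/2`), the correlation function
`ρ(X) = Σ_{λ : X ⊆ S(λ)} M(λ)` equals `det[K(x_p, x_q)]`.  Here
`S(λ) = {λ_i − i + 1/2 : i ≥ 1}`, i.e. in the integer encoding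
`{Y.rowLen k − k − 1 : k ∈ ℕ}`. -/
theorem correlation_eq_det (z : ℂ) (hz : z ≠ 0) (ξ : ℝ) (hξ : ξ ∈ Set.Ioo (0 : ℝ) (1/2)) :
    (∀ i j : ℤ,
      Summable fun t : ℕ =>
        ‖mcoef ((Real.sqrt ξ : ℂ) / ((ξ : ℂ) - 1)) (Real.sqrt ξ : ℂ) z ((starRingEnd ℂ) z)
            i (-1 - (t : ℤ)) *
          mcoefStar ((Real.sqrt ξ : ℂ) / ((ξ : ℂ) - 1)) (Real.sqrt ξ : ℂ) z ((starRingEnd ℂ) z)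
            j (-1 - (t : ℤ))‖) ∧
    (∀ s : ℕ, ∀ x : Fin s → ℤ, Function.Injective x →
      (∑' Y : YoungDiagram,
          if ∀ p : Fin s, ∃ k : ℕ, x p = (Y.rowLen k : ℤ) - k - 1 then
            mixedM z ((starRingEnd ℂ) z) ξ Y
          else 0) =
        (Matrix.of fun p q : Fin s =>
          kerK ((Real.sqrt ξ : ℂ) / ((ξ : ℂ) - 1)) (Real.sqrt ξ : ℂ) z ((starRingEnd ℂ) z)
            (x p) (x q)).det) := by
  have sqrt_mul_sqrt : (Real.sqrt ξ : ℂ) * Real.sqrt ξ = ξ := by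
    exact_mod_cast Real.mul_self_sqrt hξ.1.le
  exact (correlation_eq_det_general z _ (Complex.ofReal_ne_zero.mpr (Real.sqrt_pos.mpr hξ.1).ne')
    (by rw [abs_of_pos hξ.1]; exact hξ.2) (by rw [div_mul_eq_mul_div, sqrt_mul_sqrt])).imp_right
    And.right

end
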